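/- arXiv:1612.08439 — 2 statements merged into one kernel-verified Lean document; each statement's English description precedes it below -/
import Mathlib

section
/- Let x₀, x₀′, x₁, x₁′ be points of 𝕋¹ and let ε > 0 be a real number. Then there exists a real number δ > 0 with the following property: for any two C¹ diffeomorphisms g₀, g₁ of 𝕋¹, each different from the identity, each δ-close to the identity in the C¹ topology, and such that x_i and x_i′ are fixed points of g_i for i ∈ {0,1}, and for every integer j ≥ 1, there exists a homeomorphism f of the closed annulus 𝕋¹ × [0,1], isotopic to the identity, preserving Lebesgue measure, admitting a lift f̌ to ℝ × [0,1] whose rotation set is {0}, and satisfying: (a) f(x,0) = (g₀(x), 0) and f(x,1) = (g₁(x), 1) for every x ∈ 𝕋¹; (b-1) there exists a continuous path σ : [0,1] → 𝕋¹ × [0,1] with σ(0) ∈ 𝕋¹ × {0}, σ(1) ∈ 𝕋¹ × {1}, σ(t) ∈ 𝕋¹ × (0,1) for all t ∈ (0,1), whose image does not meet the fixed point set of f; (b-2) there exists a loop contained in 𝕋¹ × (0,1), not null-homotopic in 𝕋¹ × [0,1], whose image does not meet the fixed point set of f; (c) for every real number η > 0 there exist a point ž ∈ [0,η] × [0,1]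 ⊆ ℝ × [0,1] and an integer n ≥ 1 such that f̌ⁿ(ž) ∈ [j, j+η] × [0,1]; (d) sup_{z ∈ 𝕋¹×[0,1]} dist(f(z), z) < ε. -/
open MeasureTheory Filter Topology Set unitInterval

noncomputable section

/-- The circle `𝕋¹ = ℝ/ℤ`. -/
abbrev T1 : Type := AddCircle (1 : ℝ)

/-- The closed annulus `𝕋¹ × [0,1]`. -/
abbrev CAnn : Type := T1 × I

/-- The universal covering map `π : ℝ × [0,1] → 𝕋¹ × [0,1]`. -/
def pCA : ℝ × I → CAnn := fun z => ((z.1 : T1), z.2)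

/-- `g` is a C¹ diffeomorphism of the circle which is `δ`-close to the identity in the
C¹ topology: it admits a C¹ lift `gc` with `gc(x+1) = gc(x)+1`, nonvanishing derivative,
`|gc(x) − x| < δ` and `|gc′(x) − 1| < δ` for all `x`. -/
def CircleC1DiffeoClose (δ : ℝ) (g : T1 ≃ₜ T1) : Prop :=
  ∃ gc : ℝ → ℝ, ContDiff ℝ 1 gc ∧ (∀ x, deriv gc x ≠ 0) ∧
    (∀ x, gc (x + 1) = gc x + 1) ∧
    (∀ x : ℝ, g ((x : ℝ) : T1) = ((gc x : ℝ) : T1)) ∧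
    (∀ x, |gc x - x| < δ) ∧ (∀ x, |deriv gc x - 1| < δ)

/-- `f` is isotopic to the identity on the closed annulus. -/
def IsotopicToIdCA (f : CAnn ≃ₜ CAnn) : Prop :=
  ∃ H : ℝ × CAnn → CAnn, ContinuousOn H (Set.Icc (0 : ℝ) 1 ×ˢ Set.univ) ∧
    (∀ z, H (0, z) = z) ∧ (∀ z, H (1, z) = f z) ∧
    ∀ t ∈ Set.Icc (0 : ℝ) 1, ∃ g : CAnn ≃ₜ CAnn, ∀ z, H (t, z) = g z

/-- The rotation set of a lift `fc` of a homeomorphism of the closed annulus. -/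
def rotCA (fc : (ℝ × I) ≃ₜ (ℝ × I)) : Set EReal :=
  {ρ | ∃ (z : ℕ → ℝ × I) (n : ℕ → ℕ), Tendsto n atTop atTop ∧
    Tendsto (fun k => (((((⇑fc)^[n k] (z k)).1 - (z k).1) / (n k) : ℝ) : EReal))
      atTop (nhds ρ)}

/-!
A `C¹` function `S` on the annulus with small mixed derivative generates the area-preserving map
`(x, Y + ∂ₓS) ↦ (x + ∂_Y S, Y)`, whose fixed points are the critical points of `S`. We use
`S(x, Y) = u₀(x) φ(Y) - u₁(x) φ(1 - Y) + ν X(Y) sin(2πx) / 2π`, where `uᵢ` is the displacement of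
`gᵢ`, translated so as to vanish at `0`, `φ` is a collar function with unit slope at `0`, and the
plateau function `X` vanishes near the boundary. The column `x = 0` is invariant, so orbits have
bounded horizontal displacement; on it the points in the middle of the annulus drift down by `ν` at
each step. Conjugating by a shear `(x, y) ↦ (x + κ(y), y)` preserves area and the rotation set, puts
the boundary maps back in place, and, when `κ` goes from `0` at height `9/16` to `j` at height
`7/16`, turns this drift into a horizontal displacement by `j`. Since `κ` is fixed before `ν`, the
conjugate stays close to the identity.
-/

section Fiberwise

variable {α β γ : Type*} [TopologicalSpace α] [TopologicalSpace β] [LinearOrder β]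
  [OrderTopology β] [TopologicalSpace γ] [LinearOrder γ] [OrderClosedTopology γ]

theorem continuous_fiberwise_symm {e : α → β ≃o γ}
    (he : Continuous fun p : α × β => e p.1 p.2) :
    Continuous fun p : α × γ => (e p.1).symm p.2 := by
  have continuous_apply_const (b : β) : Continuous fun p : α × γ => e p.1 b :=
    he.comp (continuous_fst.prodMk continuous_const)
  rw [continuous_iff_lower_upperSemicontinuous, lowerSemicontinuous_iff_isOpen_preimage,
    upperSemicontinuous_iff_isOpen_preimage]
  refine ⟨fun b => ?_, fun b => ?_⟩
  · simpa only [preimage, mem_Ioi, OrderIso.lt_symm_apply] using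
      isOpen_lt (continuous_apply_const b) continuous_snd
  · simpa only [preimage, mem_Iio, OrderIso.symm_apply_lt] using
      isOpen_lt continuous_snd (continuous_apply_const b)

/-- The homeomorphism of products that preserves the first coordinate and acts on each fibre
`{a} × β` by the order isomorphism `e a`. -/
def fiberwiseHomeomorph (e : α → β ≃o γ) (he : Continuous fun p : α × β => e p.1 p.2) :
    α × β ≃ₜ α × γ where
  toFun p := (p.1, e p.1 p.2)
  invFun p := (p.1, (e p.1).symm p.2)
  left_inv p := by simp
  right_inv p := by simp
  continuous_toFun := continuous_fst.prodMk he
  continuous_invFun := continuous_fst.prodMk (continuous_fiberwise_symm he)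

end Fiberwise

section Shear

variable {G Y : Type*} [TopologicalSpace G] [AddGroup G] [IsTopologicalAddGroup G]
  [TopologicalSpace Y]

/-- The horizontal shear `(x, y) ↦ (x + κ y, y)`. -/
def shear (κ : C(Y, G)) : G × Y ≃ₜ G × Y where
  toFun z := (z.1 + κ z.2, z.2)
  invFun z := (z.1 - κ z.2, z.2)
  left_inv z := by simp
  right_inv z := by simp
  continuous_toFun := by fun_prop
  continuous_invFun := by fun_prop

@[simp]
theorem shear_apply (κ : C(Y, G)) (z : G × Y) : shear κ z = (z.1 + κ z.2, z.2) := rfl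

theorem measurePreserving_shear [MeasurableSpace G] [BorelSpace G] [SecondCountableTopology G]
    [MeasurableSpace Y] [OpensMeasurableSpace Y] (κ : C(Y, G)) (μ : Measure G) [SFinite μ]
    [μ.IsAddRightInvariant] (ν : Measure Y) [SFinite ν] :
    MeasurePreserving (shear κ) (μ.prod ν) (μ.prod ν) := by
  have skew : MeasurePreserving (fun p : Y × G => (p.1, p.2 + κ p.1)) (ν.prod μ) (ν.prod μ) :=
    (MeasurePreserving.id ν).skew_product
      (measurable_snd.add (κ.measurable.comp measurable_fst))
      (Eventually.of_forall fun y => map_add_right_eq_self μ (κ y))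
  exact Measure.measurePreserving_swap.comp (skew.comp Measure.measurePreserving_swap)

end Shear

section Covering

/-- The generator of the deck group of the covering `pCA`. -/
def deckTranslation (z : ℝ × I) : ℝ × I := (z.1 + 1, z.2)

theorem pCA_deckTranslation (z : ℝ × I) : pCA (deckTranslation z) = pCA z :=
  Prod.ext (AddCircle.coe_add_period 1 z.1) rfl

theorem isOpenQuotientMap_pCA : IsOpenQuotientMap pCA :=
  (QuotientAddGroup.isOpenQuotientMap_mk (G := ℝ)
    (N := AddSubgroup.zmultiples (1 : ℝ))).prodMap IsOpenQuotientMap.id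

theorem eq_of_coe_eq_coe {x y : ℝ} (hxy : |x - y| < 1) (h : (x : T1) = y) : x = y := by
  obtain ⟨hlo, hhi⟩ := abs_lt.1 hxy
  refine (AddCircle.coe_eq_coe_iff_of_mem_Ico (p := 1) (a := min x y)
    ⟨min_le_left _ _, ?_⟩ ⟨min_le_right _ _, ?_⟩).1 h
  all_goals rw [← min_add_add_right, lt_min_iff]; constructor <;> linarith

theorem eq_of_pCA_eq {z w : ℝ × I} (hzw : |z.1 - w.1| < 1) (h : pCA z = pCA w) : z = w :=
  Prod.ext (eq_of_coe_eq_coe hzw (Prod.mk.inj h).1) (Prod.mk.inj h).2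

variable {G : ℝ × I → ℝ × I}

theorem periodic_pCA_comp (hG : Function.Commute G deckTranslation) (y : I) :
    Function.Periodic (fun x => pCA (G (x, y))) 1 := fun x =>
  (congrArg pCA (hG (x, y))).trans (pCA_deckTranslation _)

/-- The self-map of the annulus induced by a deck-equivariant self-map of the strip. -/
def descendFun (G : ℝ × I → ℝ × I) (hG : Function.Commute G deckTranslation) : CAnn → CAnn :=
  fun z => (periodic_pCA_comp hG z.2).lift z.1

theorem semiconj_descendFun (hG : Function.Commute G deckTranslation) :
    Function.Semiconj pCA G (descendFun G hG) := fun z =>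
  ((periodic_pCA_comp hG z.2).lift_coe z.1).symm

theorem continuous_descendFun (hG : Function.Commute G deckTranslation) (hc : Continuous G) :
    Continuous (descendFun G hG) := by
  rw [← isOpenQuotientMap_pCA.continuous_comp_iff, ← (semiconj_descendFun hG).comp_eq]
  exact isOpenQuotientMap_pCA.continuous.comp hc

theorem commute_deckTranslation_symm {G : (ℝ × I) ≃ₜ (ℝ × I)}
    (hG : Function.Commute G deckTranslation) : Function.Commute G.symm deckTranslation :=
  Function.Commute.symm
    (Function.Semiconj.inverses_right hG.symm G.apply_symm_apply G.symm_apply_apply)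

/-- The homeomorphism of the annulus induced by a deck-equivariant homeomorphism of the strip. -/
def descend (G : (ℝ × I) ≃ₜ (ℝ × I)) (hG : Function.Commute G deckTranslation) :
    CAnn ≃ₜ CAnn where
  toFun := descendFun G hG
  invFun := descendFun G.symm (commute_deckTranslation_symm hG)
  left_inv := isOpenQuotientMap_pCA.surjective.forall.2 fun z => by
    rw [← semiconj_descendFun, ← semiconj_descendFun, G.symm_apply_apply]
  right_inv := isOpenQuotientMap_pCA.surjective.forall.2 fun z => by
    rw [← semiconj_descendFun, ← semiconj_descendFun, G.apply_symm_apply]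
  continuous_toFun := continuous_descendFun hG G.continuous
  continuous_invFun :=
    continuous_descendFun (commute_deckTranslation_symm hG) G.symm.continuous

theorem semiconj_descend {G : (ℝ × I) ≃ₜ (ℝ × I)} (hG : Function.Commute G deckTranslation) :
    Function.Semiconj pCA G (descend G hG) :=
  semiconj_descendFun hG

end Covering

section Dynamics

theorem IsotopicToIdCA.conj {f : CAnn ≃ₜ CAnn} (hf : IsotopicToIdCA f) (h : CAnn ≃ₜ CAnn) :
    IsotopicToIdCA (h.symm.trans (f.trans h)) := by
  obtain ⟨H, hc, h₀, h₁, ht⟩ := hf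
  refine ⟨fun p => h (H (p.1, h.symm p.2)), ?_, fun z => ?_, fun z => ?_, fun t htI => ?_⟩
  · exact h.continuous.comp_continuousOn (hc.comp (by fun_prop) fun p hp => ⟨hp.1, mem_univ _⟩)
  · simp only [h₀, h.apply_symm_apply]
  · simp only [h₁, Homeomorph.trans_apply]
  · obtain ⟨g, hg⟩ := ht t htI
    exact ⟨h.symm.trans (g.trans h), fun z => by simp only [hg, Homeomorph.trans_apply]⟩

theorem tendsto_div_of_bounded_displacement {fc : (ℝ × I) ≃ₜ (ℝ × I)} {C : ℝ}
    (hC : ∀ z n, |(fc^[n] z).1 - z.1| ≤ C) (z : ℕ → ℝ × I) {n : ℕ → ℕ}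
    (hn : Tendsto n atTop atTop) :
    Tendsto (fun k => ((((fc^[n k] (z k)).1 - (z k).1) / n k : ℝ) : EReal)) atTop (𝓝 0) := by
  refine (continuous_coe_real_ereal.tendsto 0).comp (squeeze_zero_norm (fun k => ?_)
    ((tendsto_const_div_atTop_nhds_zero_nat C).comp hn))
  rw [Real.norm_eq_abs, abs_div, Nat.abs_cast]
  exact div_le_div_of_nonneg_right (hC _ _) (Nat.cast_nonneg _)

theorem rotCA_eq_singleton_zero {fc : (ℝ × I) ≃ₜ (ℝ × I)} {C : ℝ}
    (hC : ∀ z n, |(fc^[n] z).1 - z.1| ≤ C) : rotCA fc = {0} := by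
  ext ρ
  constructor
  · rintro ⟨z, n, hn, hρ⟩
    exact tendsto_nhds_unique hρ (tendsto_div_of_bounded_displacement hC z hn)
  · rintro rfl
    exact ⟨fun _ => 0, id, tendsto_id, tendsto_div_of_bounded_displacement hC _ tendsto_id⟩

end Dynamics

section IntervalIntegral

local notation "projI" => projIcc (0 : ℝ) 1 zero_le_one

theorem intervalIntegral_swap_of_continuous {K : ℝ → ℝ → ℝ}
    (hK : Continuous (Function.uncurry K)) (a b c d : ℝ) :
    ∫ y in c..d, ∫ x in a..b, K x y = ∫ x in a..b, ∫ y in c..d, K x y :=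
  (intervalIntegral_intervalIntegral_swap ((hK.continuousOn.integrableOn_compact
    (isCompact_uIcc.prod isCompact_uIcc)).mono_set
      (prod_mono uIoc_subset_uIcc uIoc_subset_uIcc))).symm

theorem integral_comp_add_mul_one_add_deriv_of_periodic {φ P P' : ℝ → ℝ} {T : ℝ}
    (hφ : Continuous φ) (hφT : Function.Periodic φ T) (hPT : Function.Periodic P T)
    (hP : ∀ x, HasDerivAt P (P' x) x) (hP' : Continuous P') :
    ∫ x in 0..T, φ (x + P x) * (1 + P' x) = ∫ x in 0..T, φ x := by
  have change := intervalIntegral.integral_comp_mul_deriv (a := 0) (b := T)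
    (fun x _ => (hasDerivAt_id' x).add (hP x)) (by fun_prop) hφ
  simp only [Function.comp_apply, Pi.add_apply] at change
  have endpoint : T + P T = 0 + P 0 + T := by rw [hPT.eq]; ring
  rw [change, endpoint, hφT.intervalIntegral_add_eq _ 0, zero_add]

theorem integral_unitInterval (ψ : I → ℝ) : ∫ y, ψ y = ∫ y in (0 : ℝ)..1, ψ (projI y) := by
  rw [intervalIntegral.integral_of_le zero_le_one, ← integral_Icc_eq_integral_Ioc,
    ← integral_subtype measurableSet_Icc fun y => ψ (projI y)]
  simp only [projIcc_val]

theorem integral_cAnn {k : CAnn → ℝ} (hk : Continuous k) :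
    ∫ z, k z = ∫ y in (0 : ℝ)..1, ∫ x in (0 : ℝ)..1, k (pCA (x, projI y)) := by
  have integrable_k : Integrable k ((volume : Measure T1).prod (volume : Measure I)) :=
    hk.integrable_of_hasCompactSupport (HasCompactSupport.of_compactSpace k)
  have fubini : ∫ z, k z = ∫ y : I, ∫ x : T1, k (x, y) := integral_prod_symm k integrable_k
  rw [fubini, integral_unitInterval]
  refine intervalIntegral.integral_congr fun y _ => ?_
  simpa [pCA] using (AddCircle.intervalIntegral_preimage 1 0 fun x => k (x, projI y)).symm

end IntervalIntegral

/-- An exact symplectic generating function `S(x, Y)` on the strip, recorded through its partial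
derivatives `dx = ∂S/∂x`, `dy = ∂S/∂Y` and `dxy = ∂²S/∂x∂Y`. It generates the area-preserving map
`(x, Y + ∂S/∂x) ↦ (x + ∂S/∂Y, Y)`; the condition `-1 < dxy` makes both sides coordinates. -/
structure GeneratingFunction where
  dx : ℝ → ℝ → ℝ
  dy : ℝ → ℝ → ℝ
  dxy : ℝ → ℝ → ℝ
  continuous_dx : Continuous fun p : ℝ × ℝ => dx p.1 p.2
  continuous_dy : Continuous fun p : ℝ × ℝ => dy p.1 p.2
  continuous_dxy : Continuous fun p : ℝ × ℝ => dxy p.1 p.2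
  hasDerivAt_dx : ∀ x Y, HasDerivAt (dx x) (dxy x Y) Y
  hasDerivAt_dy : ∀ x Y, HasDerivAt (fun x => dy x Y) (dxy x Y) x
  neg_one_lt_dxy : ∀ x, ∀ Y ∈ Icc (0 : ℝ) 1, -1 < dxy x Y
  dx_add_one : ∀ x Y, dx (x + 1) Y = dx x Y
  dy_add_one : ∀ x Y, dy (x + 1) Y = dy x Y
  dx_zero : ∀ x, dx x 0 = 0
  dx_one : ∀ x, dx x 1 = 0

namespace GeneratingFunction

local notation "projI" => projIcc (0 : ℝ) 1 zero_le_one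

/-- The rescaled generating function `c • S`, which for `c ∈ [0, 1]` is again admissible; this is
what provides the isotopy to the identity. -/
def scale (S : GeneratingFunction) (c : I) : GeneratingFunction where
  dx x Y := c * S.dx x Y
  dy x Y := c * S.dy x Y
  dxy x Y := c * S.dxy x Y
  continuous_dx := S.continuous_dx.const_mul _
  continuous_dy := S.continuous_dy.const_mul _
  continuous_dxy := S.continuous_dxy.const_mul _
  hasDerivAt_dx x Y := (S.hasDerivAt_dx x Y).const_mul _
  hasDerivAt_dy x Y := (S.hasDerivAt_dy x Y).const_mul _
  neg_one_lt_dxy x Y hY := by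
    rcases c.2.1.eq_or_lt with hc | hc
    · norm_num [← hc]
    · nlinarith [S.neg_one_lt_dxy x Y hY, c.2.2]
  dx_add_one x Y := by rw [S.dx_add_one]
  dy_add_one x Y := by rw [S.dy_add_one]
  dx_zero x := by rw [S.dx_zero, mul_zero]
  dx_one x := by rw [S.dx_one, mul_zero]

variable (S : GeneratingFunction)

theorem hasDerivAt_add_dx (x Y : ℝ) :
    HasDerivAt (fun Y => Y + S.dx x Y) (1 + S.dxy x Y) Y :=
  (hasDerivAt_id' Y).add (S.hasDerivAt_dx x Y)

theorem hasDerivAt_add_dy (x Y : ℝ) :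
    HasDerivAt (fun x => x + S.dy x Y) (1 + S.dxy x Y) x :=
  (hasDerivAt_id' x).add (S.hasDerivAt_dy x Y)

theorem strictMonoOn_add_dx (x : ℝ) : StrictMonoOn (fun Y => Y + S.dx x Y) (Icc 0 1) := by
  refine strictMonoOn_of_deriv_pos (convex_Icc 0 1)
    (fun Y _ => (S.hasDerivAt_add_dx x Y).continuousAt.continuousWithinAt) fun Y hY => ?_
  rw [(S.hasDerivAt_add_dx x Y).deriv]
  linarith [S.neg_one_lt_dxy x Y (interior_subset hY)]

theorem strictMono_add_dy (Y : I) : StrictMono fun x => x + S.dy x Y := by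
  refine strictMono_of_deriv_pos fun x => ?_
  rw [(S.hasDerivAt_add_dy x Y).deriv]
  linarith [S.neg_one_lt_dxy x Y Y.2]

theorem image_add_dx_Icc (x : ℝ) : (fun Y => Y + S.dx x Y) '' Icc 0 1 = Icc 0 1 := by
  have continuousOn_add_dx : ContinuousOn (fun Y => Y + S.dx x Y) (Icc 0 1) := fun Y _ =>
    (S.hasDerivAt_add_dx x Y).continuousAt.continuousWithinAt
  simpa only [S.dx_zero, S.dx_one, add_zero] using
    continuousOn_add_dx.image_Icc_of_monotoneOn zero_le_one (S.strictMonoOn_add_dx x).monotoneOn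

theorem add_dx_mem_Icc (x : ℝ) {Y : ℝ} (hY : Y ∈ Icc (0 : ℝ) 1) :
    Y + S.dx x Y ∈ Icc (0 : ℝ) 1 :=
  S.image_add_dx_Icc x ▸ mem_image_of_mem _ hY

theorem surjective_add_dy (Y : I) : Function.Surjective fun x => x + S.dy x Y := by
  let F : CircleDeg1Lift :=
    ⟨⟨_, (S.strictMono_add_dy Y).monotone⟩, fun x => by simp only [S.dy_add_one]; ring⟩
  have continuous_add_dy : Continuous fun x => x + S.dy x Y :=
    continuous_iff_continuousAt.2 fun x => (S.hasDerivAt_add_dy x Y).continuousAt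
  exact continuous_add_dy.surjective F.tendsto_atTop F.tendsto_atBot

/-- The column map `Y ↦ Y + ∂S/∂x(x, Y)`. -/
def verticalOrderIso (x : ℝ) : I ≃o I :=
  StrictMono.orderIsoOfSurjective (fun Y : I => (⟨Y + S.dx x Y, S.add_dx_mem_Icc x Y.2⟩ : I))
    (fun Y Y' h => S.strictMonoOn_add_dx x Y.2 Y'.2 h) fun y => by
      obtain ⟨Y, hY, h⟩ := (S.image_add_dx_Icc x).ge y.2
      exact ⟨⟨Y, hY⟩, Subtype.ext h⟩

/-- The row map `x ↦ x + ∂S/∂Y(x, Y)`. -/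
def horizontalOrderIso (Y : I) : ℝ ≃o ℝ :=
  (S.strictMono_add_dy Y).orderIsoOfSurjective _ (S.surjective_add_dy Y)

theorem coe_verticalOrderIso (x : ℝ) (Y : I) :
    (S.verticalOrderIso x Y : ℝ) = Y + S.dx x Y := rfl

theorem continuous_verticalOrderIso_scale :
    Continuous fun p : (I × ℝ) × I => (S.scale p.1.1).verticalOrderIso p.1.2 p.2 := by
  have continuous_dx_coe : Continuous fun p : (I × ℝ) × I => S.dx p.1.2 p.2 :=
    S.continuous_dx.comp (by fun_prop : Continuous fun p : (I × ℝ) × I => (p.1.2, (p.2 : ℝ)))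
  refine Continuous.subtype_mk (f := fun p : (I × ℝ) × I => (p.2 + p.1.1 * S.dx p.1.2 p.2 : ℝ))
    ?_ _
  fun_prop

theorem continuous_verticalOrderIso : Continuous fun p : ℝ × I => S.verticalOrderIso p.1 p.2 :=
  (S.continuous_dx.comp (by fun_prop : Continuous fun p : ℝ × I => (p.1, (p.2 : ℝ)))
    |> (continuous_subtype_val.comp continuous_snd).add).subtype_mk _

theorem continuous_horizontalOrderIso :
    Continuous fun p : I × ℝ => S.horizontalOrderIso p.1 p.2 :=
  continuous_snd.add
    (S.continuous_dy.comp (by fun_prop : Continuous fun p : I × ℝ => (p.2, (p.1 : ℝ))))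

/-- The coordinate change `(x, Y) ↦ (x, Y + ∂S/∂x(x, Y))`. -/
def vertical : (ℝ × I) ≃ₜ (ℝ × I) :=
  fiberwiseHomeomorph S.verticalOrderIso S.continuous_verticalOrderIso

/-- The coordinate change `(x, Y) ↦ (x + ∂S/∂Y(x, Y), Y)`. -/
def horizontal : (ℝ × I) ≃ₜ (ℝ × I) :=
  (Homeomorph.prodComm ℝ I).trans
    ((fiberwiseHomeomorph S.horizontalOrderIso S.continuous_horizontalOrderIso).trans
      (Homeomorph.prodComm I ℝ))

theorem vertical_apply (z : ℝ × I) : S.vertical z = (z.1, S.verticalOrderIso z.1 z.2) := rfl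

theorem horizontal_apply (z : ℝ × I) : S.horizontal z = (z.1 + S.dy z.1 z.2, z.2) := rfl

/-- The homeomorphism of the strip generated by `S`. -/
def map : (ℝ × I) ≃ₜ (ℝ × I) := S.vertical.symm.trans S.horizontal

theorem map_vertical (z : ℝ × I) : S.map (S.vertical z) = (z.1 + S.dy z.1 z.2, z.2) := by
  rw [map, Homeomorph.trans_apply, Homeomorph.symm_apply_apply, horizontal_apply]

theorem commute_vertical : Function.Commute S.vertical deckTranslation := fun z =>
  Prod.ext rfl (Subtype.ext (congrArg ((z.2 : ℝ) + ·) (S.dx_add_one z.1 z.2)))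

theorem commute_map : Function.Commute S.map deckTranslation := by
  have commute_horizontal : Function.Commute S.horizontal deckTranslation := fun z =>
    Prod.ext (by simp only [horizontal_apply, deckTranslation, S.dy_add_one]; ring) rfl
  exact commute_horizontal.comp_left (commute_deckTranslation_symm S.commute_vertical)

/-- The homeomorphism of the annulus generated by `S`. -/
def annulusMap : CAnn ≃ₜ CAnn := descend S.map S.commute_map

theorem annulusMap_pCA (z : ℝ × I) : S.annulusMap (pCA z) = pCA (S.map z) :=
  (semiconj_descend S.commute_map z).symm

section Isotopy

theorem continuous_scale_map : Continuous fun p : I × (ℝ × I) => (S.scale p.1).map p.2 := by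
  have continuous_height : Continuous fun p : I × (ℝ × I) =>
      ((S.scale p.1).verticalOrderIso p.2.1).symm p.2.2 :=
    (continuous_fiberwise_symm (e := fun a : I × ℝ => (S.scale a.1).verticalOrderIso a.2)
      S.continuous_verticalOrderIso_scale).comp
      (g := fun q : (I × ℝ) × I => ((S.scale q.1.1).verticalOrderIso q.1.2).symm q.2)
      (f := fun p : I × (ℝ × I) => ((p.1, p.2.1), p.2.2)) (by fun_prop)
  have continuous_dy_height := S.continuous_dy.comp
    ((continuous_fst.comp continuous_snd).prodMk (continuous_subtype_val.comp continuous_height))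
  exact ((continuous_fst.comp continuous_snd).add
    ((continuous_subtype_val.comp continuous_fst).mul continuous_dy_height)).prodMk
      continuous_height

theorem continuous_scale_annulusMap :
    Continuous fun p : I × CAnn => (S.scale p.1).annulusMap p.2 := by
  rw [← (IsOpenQuotientMap.id.prodMap isOpenQuotientMap_pCA).continuous_comp_iff]
  simpa only [Function.comp_def, Prod.map, id, annulusMap_pCA] using
    isOpenQuotientMap_pCA.continuous.comp S.continuous_scale_map

theorem scale_zero_map (z : ℝ × I) : (S.scale 0).map z = z := by
  have vertical_eq : (S.scale 0).vertical z = z :=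
    Prod.ext rfl (Subtype.ext (by simp [vertical_apply, coe_verticalOrderIso, scale]))
  conv_lhs => rw [← vertical_eq, map_vertical]
  simp [scale]

theorem scale_one : S.scale 1 = S := by simp [scale]

theorem isotopicToIdCA_annulusMap : IsotopicToIdCA S.annulusMap := by
  refine ⟨fun p => (S.scale (projI p.1)).annulusMap p.2, ?_, ?_, ?_, ?_⟩
  · exact (S.continuous_scale_annulusMap.comp
      (((continuous_projIcc (h := zero_le_one)).comp continuous_fst).prodMk
        continuous_snd)).continuousOn
  · refine isOpenQuotientMap_pCA.surjective.forall.2 fun z => ?_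
    simp only [projIcc_left, annulusMap_pCA]
    exact congrArg pCA (S.scale_zero_map z)
  · intro z
    simp only [projIcc_right]
    exact congrArg (fun S => S.annulusMap z) S.scale_one
  · exact fun t _ => ⟨(S.scale (projI t)).annulusMap, fun _ => rfl⟩

end Isotopy

section Area

theorem integral_comp_verticalOrderIso (x : ℝ) {ψ : I → ℝ} (hψ : Continuous ψ) :
    ∫ Y in (0 : ℝ)..1, ψ (S.verticalOrderIso x (projI Y)) * (1 + S.dxy x Y) =
      ∫ y in (0 : ℝ)..1, ψ (projI y) := by
  have change := intervalIntegral.integral_comp_mul_deriv (a := 0) (b := 1)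
    (g := fun y => ψ (projI y)) (fun Y _ => S.hasDerivAt_add_dx x Y)
    (continuous_const.add (S.continuous_dxy.comp (by fun_prop : Continuous fun Y => (x, Y)))
      |>.continuousOn) (hψ.comp continuous_projIcc)
  simp only [S.dx_zero, S.dx_one, add_zero] at change
  rw [← change]
  refine intervalIntegral.integral_congr fun Y hY => ?_
  rw [uIcc_of_le zero_le_one] at hY
  have vertical_eq : S.verticalOrderIso x (projI Y) = projI (Y + S.dx x Y) := by
    rw [projIcc_of_mem zero_le_one hY, projIcc_of_mem zero_le_one (S.add_dx_mem_Icc x hY)]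
    rfl
  simp only [Function.comp_apply, vertical_eq]

theorem integral_column (x : ℝ) {Φ : ℝ × I → ℝ} (hΦ : Continuous Φ) :
    ∫ y in (0 : ℝ)..1, Φ (S.map (x, projI y)) =
      ∫ Y in (0 : ℝ)..1, Φ (x + S.dy x Y, projI Y) * (1 + S.dxy x Y) := by
  rw [← S.integral_comp_verticalOrderIso x (ψ := fun y => Φ (S.map (x, y)))
    (hΦ.comp (S.map.continuous.comp (by fun_prop)))]
  refine intervalIntegral.integral_congr fun Y hY => ?_
  rw [uIcc_of_le zero_le_one] at hY
  have map_eq : S.map (x, S.verticalOrderIso x (projI Y)) = (x + S.dy x Y, projI Y) := by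
    rw [projIcc_of_mem zero_le_one hY]
    exact S.map_vertical (x, ⟨Y, hY⟩)
  simp only [map_eq]

theorem integral_row (Y : ℝ) {φ : ℝ → ℝ} (hφ : Continuous φ) (hφ1 : Function.Periodic φ 1) :
    ∫ x in (0 : ℝ)..1, φ (x + S.dy x Y) * (1 + S.dxy x Y) = ∫ x in (0 : ℝ)..1, φ x :=
  integral_comp_add_mul_one_add_deriv_of_periodic hφ hφ1 (fun x => S.dy_add_one x Y)
    (fun x => S.hasDerivAt_dy x Y)
    (S.continuous_dxy.comp (by fun_prop : Continuous fun x => (x, Y)))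

theorem integral_comp_map {Φ : ℝ × I → ℝ} (hΦ : Continuous Φ)
    (hΦ1 : ∀ y, Function.Periodic (fun x => Φ (x, y)) 1) :
    ∫ y in (0 : ℝ)..1, ∫ x in (0 : ℝ)..1, Φ (S.map (x, projI y)) =
      ∫ y in (0 : ℝ)..1, ∫ x in (0 : ℝ)..1, Φ (x, projI y) := by
  have continuous_projI : Continuous (projI) := continuous_projIcc
  have continuous_jacobian : Continuous fun p : ℝ × ℝ =>
      Φ (p.1 + S.dy p.1 p.2, projI p.2) * (1 + S.dxy p.1 p.2) :=
    (hΦ.comp ((continuous_fst.add S.continuous_dy).prodMk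
      (continuous_projI.comp continuous_snd))).mul (continuous_const.add S.continuous_dxy)
  calc
    _ = ∫ x in (0 : ℝ)..1, ∫ y in (0 : ℝ)..1, Φ (S.map (x, projI y)) :=
      intervalIntegral_swap_of_continuous (K := fun x y => Φ (S.map (x, projI y)))
        (hΦ.comp (S.map.continuous.comp (by fun_prop))) ..
    _ = ∫ x in (0 : ℝ)..1, ∫ y in (0 : ℝ)..1, Φ (x + S.dy x y, projI y) * (1 + S.dxy x y) := by
      simp only [S.integral_column _ hΦ]
    _ = ∫ y in (0 : ℝ)..1, ∫ x in (0 : ℝ)..1, Φ (x + S.dy x y, projI y) * (1 + S.dxy x y) :=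
      (intervalIntegral_swap_of_continuous
        (K := fun x y => Φ (x + S.dy x y, projI y) * (1 + S.dxy x y)) continuous_jacobian ..).symm
    _ = _ := intervalIntegral.integral_congr fun y _ =>
      S.integral_row y (φ := fun x => Φ (x, projI y)) (hΦ.comp (by fun_prop)) (hΦ1 _)

theorem measurePreserving_annulusMap : MeasurePreserving S.annulusMap volume volume := by
  refine ⟨S.annulusMap.continuous.measurable, ?_⟩
  refine ext_of_forall_integral_eq_of_IsFiniteMeasure fun k => ?_
  rw [integral_map S.annulusMap.continuous.aemeasurable k.continuous.aestronglyMeasurable,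
    integral_cAnn (k := fun z => k (S.annulusMap z))
      (k.continuous.comp S.annulusMap.continuous), integral_cAnn k.continuous]
  simp only [annulusMap_pCA]
  exact S.integral_comp_map (k.continuous.comp isOpenQuotientMap_pCA.continuous)
    fun y x => congrArg k (pCA_deckTranslation (x, y))

end Area

end GeneratingFunction

/-- The quotient map `ℝ → 𝕋¹` as a bundled continuous map. -/
def circleProj : C(ℝ, T1) := ⟨fun x => x, AddCircle.continuous_mk' 1⟩

theorem semiconj_pCA_shear (κ : C(I, ℝ)) :
    Function.Semiconj pCA (shear κ) (shear (circleProj.comp κ)) := fun _ => rfl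

theorem commute_shear (κ : C(I, ℝ)) : Function.Commute (shear κ) deckTranslation := fun z =>
  Prod.ext (add_right_comm z.1 1 (κ z.2)) rfl

/-- A path in the strip, for `t ∈ [0, 1]`: up the column `p` to height `ℓ`, along the level `ℓ` to
the column `q`, and up that column to the top. -/
def crossing (p q ℓ t : ℝ) : ℝ × I :=
  (p + (q - p) * projIcc (0 : ℝ) 1 zero_le_one (2 * t - ℓ),
    projIcc 0 1 zero_le_one (min (2 * t) (max ℓ (2 * t - 1))))

theorem continuous_crossing (p q ℓ : ℝ) : Continuous (crossing p q ℓ) := by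
  unfold crossing
  fun_prop

theorem crossing_cases {ℓ : ℝ} (hℓ : ℓ ∈ Ioo (0 : ℝ) 1) (p q t : ℝ) :
    ((crossing p q ℓ t).1 = p ∧ ((crossing p q ℓ t).2 : ℝ) ≤ ℓ) ∨
      ((crossing p q ℓ t).2 : ℝ) = ℓ ∨
      ((crossing p q ℓ t).1 = q ∧ ℓ ≤ ((crossing p q ℓ t).2 : ℝ)) := by
  obtain ⟨hℓ₀, hℓ₁⟩ := hℓ
  simp only [crossing, coe_projIcc]
  rcases le_or_gt (2 * t) ℓ with h | h
  · left
    rw [min_eq_right (by linarith : 2 * t - ℓ ≤ 1), max_eq_left (by linarith)]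
    grind
  · rcases le_or_gt (1 + ℓ) (2 * t) with h' | h'
    · right; right
      rw [min_eq_left (by linarith : 1 ≤ 2 * t - ℓ), max_eq_right zero_le_one]
      grind
    · right; left
      grind

theorem crossing_snd_zero {ℓ : ℝ} (hℓ : ℓ ∈ Ioo (0 : ℝ) 1) (p q : ℝ) :
    ((crossing p q ℓ 0).2 : ℝ) = 0 := by
  simp only [crossing, coe_projIcc]
  grind

theorem crossing_snd_one {ℓ : ℝ} (hℓ : ℓ ∈ Ioo (0 : ℝ) 1) (p q : ℝ) :
    ((crossing p q ℓ 1).2 : ℝ) = 1 := by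
  simp only [crossing, coe_projIcc]
  grind

theorem crossing_snd_mem_Ioo {ℓ t : ℝ} (hℓ : ℓ ∈ Ioo (0 : ℝ) 1) (p q : ℝ)
    (ht : t ∈ Ioo (0 : ℝ) 1) :
    ((crossing p q ℓ t).2 : ℝ) ∈ Ioo (0 : ℝ) 1 := by
  simp only [crossing, coe_projIcc]
  grind

namespace GeneratingFunction

variable (S : GeneratingFunction) (κ : C(I, ℝ))

section Columns

theorem le_fst_map_iff {a : ℝ} (ha : ∀ Y : I, S.dy a Y = 0) (z : ℝ × I) :
    a ≤ (S.map z).1 ↔ a ≤ z.1 := by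
  obtain ⟨⟨x, Y⟩, rfl⟩ := S.vertical.surjective z
  rw [map_vertical, vertical_apply]
  simpa only [ha, add_zero] using (S.strictMono_add_dy Y).le_iff_le (a := a) (b := x)

theorem le_fst_iterate_map_iff {a : ℝ} (ha : ∀ Y : I, S.dy a Y = 0) (n : ℕ) (z : ℝ × I) :
    a ≤ (S.map^[n] z).1 ↔ a ≤ z.1 := by
  induction n with
  | zero => rfl
  | succ n ih => rw [Function.iterate_succ_apply', S.le_fst_map_iff ha, ih]

theorem dy_intCast (h₀ : ∀ Y : I, S.dy 0 Y = 0) (m : ℤ) (Y : I) : S.dy m Y = 0 := by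
  have periodic_dy : Function.Periodic (fun x => S.dy x Y) 1 := fun x => S.dy_add_one x Y
  simpa only [mul_one, h₀] using periodic_dy.int_mul_eq m

theorem abs_fst_iterate_map_sub_le (h₀ : ∀ Y : I, S.dy 0 Y = 0) (n : ℕ) (z : ℝ × I) :
    |(S.map^[n] z).1 - z.1| ≤ 1 := by
  have floor_eq : ⌊(S.map^[n] z).1⌋ = ⌊z.1⌋ :=
    eq_of_forall_le_iff fun m => by
      rw [Int.le_floor, Int.le_floor, S.le_fst_iterate_map_iff (S.dy_intCast h₀ m)]
  exact (Int.abs_sub_lt_one_of_floor_eq_floor floor_eq).le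

theorem iterate_map_of_dx_eq {x ν : ℝ} (hν : 0 ≤ ν) {n : ℕ} {y y' : I}
    (hdx : ∀ Y ∈ Icc y' y, S.dx x Y = ν) (hdy : ∀ Y : I, S.dy x Y = 0)
    (hy : (y : ℝ) = y' + n * ν) : S.map^[n] (x, y) = (x, y') := by
  induction n generalizing y with
  | zero => rw [show y = y' from Subtype.ext (by simpa using hy)]; rfl
  | succ n ih =>
    push_cast at hy
    have hnν : 0 ≤ n * ν := by positivity
    let Y : I := ⟨y' + n * ν, by linarith [y'.2.1], by linarith [y.2.2]⟩
    have hYy : Y ≤ y := Subtype.coe_le_coe.1 (by simp only [Y]; linarith)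
    have hy'Y : y' ≤ Y := Subtype.coe_le_coe.1 (by simp only [Y]; linarith)
    have vertical_eq : S.vertical (x, Y) = (x, y) := Prod.ext rfl (Subtype.ext (by
      rw [vertical_apply, coe_verticalOrderIso, hdx Y ⟨hy'Y, hYy⟩]
      simp only [Y]
      linarith))
    rw [Function.iterate_succ_apply, ← vertical_eq, map_vertical, hdy, add_zero]
    exact ih (fun Z hZ => hdx Z ⟨hZ.1, hZ.2.trans hYy⟩) rfl

end Columns

/-- The conjugate of `S.map` by the shear of `κ`. -/
def twistedLift : (ℝ × I) ≃ₜ (ℝ × I) := (shear κ).symm.trans (S.map.trans (shear κ))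

/-- The conjugate of `S.annulusMap` by the shear of `κ`, acting on the annulus. -/
def twistedMap : CAnn ≃ₜ CAnn :=
  (shear (circleProj.comp κ)).symm.trans (S.annulusMap.trans (shear (circleProj.comp κ)))

/-- The coordinates `(x, Y)` in which the twisted map reads
`(x + κ (Y + ∂S/∂x), Y + ∂S/∂x) ↦ (x + ∂S/∂Y + κ Y, Y)`. -/
def chart : (ℝ × I) ≃ₜ (ℝ × I) := S.vertical.trans (shear κ)

theorem chart_apply (z : ℝ × I) :
    S.chart κ z = (z.1 + κ (S.verticalOrderIso z.1 z.2), S.verticalOrderIso z.1 z.2) := rfl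

theorem twistedLift_shear (z : ℝ × I) : S.twistedLift κ (shear κ z) = shear κ (S.map z) := by
  rw [twistedLift, Homeomorph.trans_apply, Homeomorph.symm_apply_apply, Homeomorph.trans_apply]

theorem twistedLift_chart (z : ℝ × I) :
    S.twistedLift κ (S.chart κ z) = (z.1 + S.dy z.1 z.2 + κ z.2, z.2) := by
  rw [chart, Homeomorph.trans_apply, twistedLift_shear, map_vertical, shear_apply]

theorem iterate_twistedLift_shear (n : ℕ) (z : ℝ × I) :
    (S.twistedLift κ)^[n] (shear κ z) = shear κ (S.map^[n] z) :=
  ((Function.Semiconj.iterate_right (fun z => (S.twistedLift_shear κ z).symm) n) z).symm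

theorem semiconj_twistedLift : Function.Semiconj pCA (S.twistedLift κ) (S.twistedMap κ) := by
  refine (shear κ).surjective.forall.2 fun z => ?_
  rw [twistedLift_shear, semiconj_pCA_shear, semiconj_pCA_shear, ← S.annulusMap_pCA]
  simp only [twistedMap, Homeomorph.trans_apply, Homeomorph.symm_apply_apply]

theorem isotopicToIdCA_twistedMap : IsotopicToIdCA (S.twistedMap κ) :=
  S.isotopicToIdCA_annulusMap.conj _

theorem measurePreserving_twistedMap : MeasurePreserving (S.twistedMap κ) volume volume := by
  have shear_preserves : MeasurePreserving (shear (circleProj.comp κ)).toMeasurableEquiv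
      (volume : Measure CAnn) volume := measurePreserving_shear _ _ _
  exact shear_preserves.comp (S.measurePreserving_annulusMap.comp (shear_preserves.symm _))

theorem rotCA_twistedLift (h₀ : ∀ Y : I, S.dy 0 Y = 0) : rotCA (S.twistedLift κ) = {0} := by
  refine rotCA_eq_singleton_zero (C := 1 + 2 * ‖κ‖) ((shear κ).surjective.forall.2 fun z n => ?_)
  rw [iterate_twistedLift_shear, shear_apply, shear_apply]
  have map_bound := abs_le.1 (S.abs_fst_iterate_map_sub_le h₀ n z)
  have shear_bound := abs_le.1 (κ.norm_coe_le_norm z.2)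
  have shear_bound' := abs_le.1 (κ.norm_coe_le_norm (S.map^[n] z).2)
  rw [abs_le]
  constructor <;> linarith

theorem twistedMap_of_dx_eq_zero {Y : I} (hY : ∀ x, S.dx x Y = 0) {g : T1 → T1}
    (hg : ∀ x : ℝ, g x = ((x + S.dy (x - κ Y) Y : ℝ) : T1)) (x : T1) :
    S.twistedMap κ (x, Y) = (g x, Y) := by
  obtain ⟨x, rfl⟩ := QuotientAddGroup.mk_surjective x
  have chart_eq : S.chart κ (x - κ Y, Y) = (x, Y) := by
    have height_eq : S.verticalOrderIso (x - κ Y) Y = Y :=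
      Subtype.ext (by rw [coe_verticalOrderIso, hY, add_zero])
    rw [chart_apply, height_eq, sub_add_cancel]
  calc S.twistedMap κ (pCA (x, Y))
      = pCA (S.twistedLift κ (S.chart κ (x - κ Y, Y))) := by
        rw [chart_eq, semiconj_twistedLift]
    _ = pCA (x + S.dy (x - κ Y) Y, Y) := by
        rw [twistedLift_chart]
        congr 2
        ring
    _ = (g x, Y) := Prod.ext (hg x).symm rfl

theorem dist_twistedMap_lt {ε : ℝ}
    (hx : ∀ x (Y : I), |S.dy x Y| + |κ Y - κ (S.verticalOrderIso x Y)| < ε)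
    (hy : ∀ x (Y : I), |S.dx x Y| < ε) (z : CAnn) : dist (S.twistedMap κ z) z < ε := by
  obtain ⟨w, rfl⟩ := isOpenQuotientMap_pCA.surjective z
  obtain ⟨⟨x, Y⟩, rfl⟩ := (S.chart κ).surjective w
  rw [← semiconj_twistedLift, twistedLift_chart, chart_apply, Prod.dist_eq]
  refine max_lt ?_ ?_
  · simp only [pCA]
    rw [dist_eq_norm, ← AddCircle.coe_sub]
    refine (QuotientAddGroup.norm_mk_le_norm).trans_lt ?_
    calc |x + S.dy x Y + κ Y - (x + κ (S.verticalOrderIso x Y))|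
        = |S.dy x Y + (κ Y - κ (S.verticalOrderIso x Y))| := by congr 1; ring
      _ ≤ |S.dy x Y| + |κ Y - κ (S.verticalOrderIso x Y)| := abs_add_le _ _
      _ < ε := hx x Y
  · simpa [Subtype.dist_eq, Real.dist_eq, pCA, coe_verticalOrderIso] using hy x Y

section FixedPoints

/-- `(x, Y)` is not a critical point of `S`. -/
def IsRegular (x Y : ℝ) : Prop := S.dx x Y ≠ 0 ∨ S.dy x Y ≠ 0

theorem twistedMap_pCA_chart_ne {z : ℝ × I} (hdy : |S.dy z.1 z.2| < 1)
    (hz : S.IsRegular z.1 z.2) :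
    S.twistedMap κ (pCA (S.chart κ z)) ≠ pCA (S.chart κ z) := by
  rw [chart, Homeomorph.trans_apply, semiconj_pCA_shear]
  simp only [twistedMap, Homeomorph.trans_apply, Homeomorph.symm_apply_apply, ne_eq,
    EmbeddingLike.apply_eq_iff_eq, annulusMap_pCA]
  rw [map_vertical, vertical_apply]
  intro fixed
  have lift_fixed := eq_of_pCA_eq (by simpa using hdy) fixed
  obtain ⟨dy_eq, height_eq⟩ := Prod.mk.inj lift_fixed
  have dx_eq := congrArg Subtype.val height_eq
  rw [coe_verticalOrderIso] at dx_eq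
  rcases hz with h | h <;> exact h (by linarith)

theorem chart_snd_mem_Ioo {z : ℝ × I} (hz : (z.2 : ℝ) ∈ Ioo (0 : ℝ) 1) :
    ((S.chart κ z).2 : ℝ) ∈ Ioo (0 : ℝ) 1 := by
  have strictMonoOn := S.strictMonoOn_add_dx z.1
  have lower := strictMonoOn (left_mem_Icc.2 zero_le_one) z.2.2 hz.1
  have upper := strictMonoOn z.2.2 (right_mem_Icc.2 zero_le_one) hz.2
  simp only [S.dx_zero, S.dx_one, add_zero] at lower upper
  exact ⟨lower, upper⟩

theorem exists_path_twistedMap_ne {p q ℓ : ℝ} (hℓ : ℓ ∈ Ioo (0 : ℝ) 1)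
    (hdy : ∀ x (Y : I), |S.dy x Y| < 1) (hp : ∀ Y ∈ Icc 0 ℓ, S.IsRegular p Y)
    (hlevel : ∀ x, S.IsRegular x ℓ) (hq : ∀ Y ∈ Icc ℓ 1, S.IsRegular q Y) :
    ∃ sp : ℝ → CAnn, ContinuousOn sp (Icc 0 1) ∧ ((sp 0).2 : ℝ) = 0 ∧ ((sp 1).2 : ℝ) = 1 ∧
      (∀ t ∈ Ioo (0 : ℝ) 1, ((sp t).2 : ℝ) ∈ Ioo (0 : ℝ) 1) ∧
      ∀ t ∈ Icc (0 : ℝ) 1, S.twistedMap κ (sp t) ≠ sp t := by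
  refine ⟨fun t => pCA (S.chart κ (crossing p q ℓ t)), ?_, ?_, ?_, fun t ht => ?_, fun t _ => ?_⟩
  · exact (isOpenQuotientMap_pCA.continuous.comp
      ((S.chart κ).continuous.comp (continuous_crossing p q ℓ))).continuousOn
  · simp only [pCA, chart_apply, coe_verticalOrderIso, crossing_snd_zero hℓ, S.dx_zero, add_zero]
  · simp only [pCA, chart_apply, coe_verticalOrderIso, crossing_snd_one hℓ, S.dx_one, add_zero]
  · exact S.chart_snd_mem_Ioo κ (crossing_snd_mem_Ioo hℓ p q ht)
  · refine S.twistedMap_pCA_chart_ne κ (hdy _ _) ?_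
    rcases crossing_cases hℓ p q t with ⟨hx, hY⟩ | hY | ⟨hx, hY⟩
    · rw [hx]; exact hp _ ⟨(crossing p q ℓ t).2.2.1, hY⟩
    · rw [hY]; exact hlevel _
    · rw [hx]; exact hq _ ⟨hY, (crossing p q ℓ t).2.2.2⟩

theorem exists_essential_loop_twistedMap_ne {ℓ : ℝ} (hℓ : ℓ ∈ Ioo (0 : ℝ) 1)
    (hdy : ∀ x (Y : I), |S.dy x Y| < 1) (hlevel : ∀ x, S.IsRegular x ℓ) :
    ∃ (Γ : ℝ → ℝ × I) (m : ℤ), m ≠ 0 ∧ Continuous Γ ∧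
      (∀ t, Γ (t + 1) = ((Γ t).1 + (m : ℝ), (Γ t).2)) ∧
      (∀ t, ((Γ t).2 : ℝ) ∈ Ioo (0 : ℝ) 1) ∧
      ∀ t, S.twistedMap κ (pCA (Γ t)) ≠ pCA (Γ t) := by
  let level : I := ⟨ℓ, Ioo_subset_Icc_self hℓ⟩
  have commute_chart : Function.Commute (S.chart κ) deckTranslation :=
    (commute_shear κ).comp_left S.commute_vertical
  refine ⟨fun t => S.chart κ (t, level), 1, one_ne_zero, ?_, fun t => ?_, fun t => ?_, fun t => ?_⟩
  · exact (S.chart κ).continuous.comp (by fun_prop)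
  · simpa only [Int.cast_one, deckTranslation] using commute_chart (t, level)
  · exact S.chart_snd_mem_Ioo κ hℓ
  · exact S.twistedMap_pCA_chart_ne κ (hdy _ _) (hlevel t)

end FixedPoints

end GeneratingFunction

section Cutoffs

theorem hasDerivAt_mul_abs (t : ℝ) : HasDerivAt (fun t : ℝ => t * |t|) (2 * |t|) t := by
  have off_zero (s : ℝ) (hs : s ≠ 0) : HasDerivAt (fun t : ℝ => t * |t|) (2 * |s|) s := by
    refine ((hasDerivAt_id s).mul (hasDerivAt_abs hs)).congr_deriv ?_
    rw [id, one_mul, mul_comm, sign_mul_self]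
    ring
  rcases eq_or_ne t 0 with rfl | ht
  · exact hasDerivAt_of_hasDerivAt_of_ne off_zero (by fun_prop) (by fun_prop)
  · exact off_zero t ht

theorem hasDerivAt_max_zero_sq (t : ℝ) :
    HasDerivAt (fun t : ℝ => (max t 0) ^ 2) (2 * max t 0) t := by
  have sq_eq (s : ℝ) : (max s 0) ^ 2 = (s ^ 2 + s * |s|) / 2 := by
    rcases le_total s 0 with h | h
    · rw [max_eq_right h, abs_of_nonpos h]; ring
    · rw [max_eq_left h, abs_of_nonneg h]; ring
  have two_mul_max (s : ℝ) : 2 * max s 0 = s + |s| := by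
    rcases le_total s 0 with h | h
    · rw [max_eq_right h, abs_of_nonpos h]; ring
    · rw [max_eq_left h, abs_of_nonneg h]; ring
  simp only [sq_eq]
  refine (((hasDerivAt_pow 2 t).add (hasDerivAt_mul_abs t)).div_const 2).congr_deriv ?_
  simp only [two_mul_max, Nat.cast_ofNat, Nat.reduceSub, pow_one]
  ring

/-- A `C¹` profile supported in `[0, 1/4]` (for positive arguments), vanishing at `0` with
derivative `1` there. It confines the prescribed boundary displacement to a collar. -/
def collar (Y : ℝ) : ℝ := Y * (max (1 - 4 * Y) 0) ^ 2

/-- The derivative of `collar`. -/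
def collarDeriv (Y : ℝ) : ℝ := (max (1 - 4 * Y) 0) ^ 2 - 8 * Y * max (1 - 4 * Y) 0

theorem continuous_collar : Continuous collar := by unfold collar; fun_prop

theorem continuous_collarDeriv : Continuous collarDeriv := by unfold collarDeriv; fun_prop

theorem hasDerivAt_collar (Y : ℝ) : HasDerivAt collar (collarDeriv Y) Y := by
  have inner : HasDerivAt (fun Y : ℝ => 1 - 4 * Y) (-4) Y := by
    simpa using ((hasDerivAt_id Y).const_mul 4).const_sub 1
  refine ((hasDerivAt_id Y).mul ((hasDerivAt_max_zero_sq _).comp Y inner)).congr_deriv ?_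
  simp only [collarDeriv, Function.comp_apply, id]
  ring

theorem collar_zero : collar 0 = 0 := zero_mul _

theorem collarDeriv_zero : collarDeriv 0 = 1 := by norm_num [collarDeriv]

theorem collar_eq_zero {Y : ℝ} (hY : 1 / 4 ≤ Y) : collar Y = 0 := by
  rw [collar, max_eq_right (by linarith)]; ring

theorem collarDeriv_eq_zero {Y : ℝ} (hY : 1 / 4 ≤ Y) : collarDeriv Y = 0 := by
  rw [collarDeriv, max_eq_right (by linarith)]; ring

theorem collar_nonneg {Y : ℝ} (hY : 0 ≤ Y) : 0 ≤ collar Y := by unfold collar; positivity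

theorem collar_pos {Y : ℝ} (hY : Y ∈ Ioo (0 : ℝ) (1 / 4)) : 0 < collar Y :=
  mul_pos hY.1 (pow_pos (lt_max_of_lt_left (by linarith [hY.2])) 2)

theorem collar_le_sub {Y : ℝ} (hY : Y ∈ Icc (0 : ℝ) (1 / 4)) : collar Y ≤ 1 / 4 - Y := by
  obtain ⟨hY₀, hY₁⟩ := hY
  rw [collar, max_eq_left (by linarith)]
  have mul_le : Y * (1 - 4 * Y) ≤ 1 / 4 := by nlinarith
  nlinarith [mul_nonneg (sub_nonneg.2 mul_le) (sub_nonneg.2 hY₁)]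

theorem abs_collar_le_one {Y : ℝ} (hY : 0 ≤ Y) : |collar Y| ≤ 1 := by
  rw [abs_of_nonneg (collar_nonneg hY)]
  rcases le_total Y (1 / 4) with h | h
  · linarith [collar_le_sub ⟨hY, h⟩]
  · rw [collar_eq_zero h]; norm_num

theorem abs_collarDeriv_le_one {Y : ℝ} (hY : 0 ≤ Y) : |collarDeriv Y| ≤ 1 := by
  rcases le_total Y (1 / 4) with h | h
  · rw [collarDeriv, max_eq_left (by linarith), abs_le]
    constructor <;> nlinarith
  · rw [collarDeriv_eq_zero h]; norm_num

theorem collarDeriv_neg {Y : ℝ} (hY : Y ∈ Ioo (1 / 12 : ℝ) (1 / 4)) : collarDeriv Y < 0 := by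
  obtain ⟨hY₀, hY₁⟩ := hY
  rw [collarDeriv, max_eq_left (by linarith)]
  nlinarith

/-- A `C¹` monotone step, equal to `0` on `(-∞, 0]` and to `1` on `[1, ∞)`. -/
def step (t : ℝ) : ℝ := 1 - (max (1 - (max t 0) ^ 2) 0) ^ 2

/-- The derivative of `step`. -/
def stepDeriv (t : ℝ) : ℝ := 4 * max (1 - (max t 0) ^ 2) 0 * max t 0

theorem hasDerivAt_step (t : ℝ) : HasDerivAt step (stepDeriv t) t := by
  have inner := (hasDerivAt_max_zero_sq t).const_sub 1
  refine (((hasDerivAt_max_zero_sq _).comp t inner).const_sub 1).congr_deriv ?_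
  rw [stepDeriv]
  ring

theorem step_eq_zero {t : ℝ} (ht : t ≤ 0) : step t = 0 := by
  rw [step, max_eq_right ht]; norm_num

theorem step_eq_one {t : ℝ} (ht : 1 ≤ t) : step t = 1 := by
  have max_eq : max t 0 = t := max_eq_left (by linarith)
  rw [step, max_eq, max_eq_right (by nlinarith)]
  norm_num

theorem step_mem_Icc (t : ℝ) : step t ∈ Icc (0 : ℝ) 1 := by
  have lower : 0 ≤ max (1 - (max t 0) ^ 2) 0 := le_max_right _ _
  have upper : max (1 - (max t 0) ^ 2) 0 ≤ 1 :=
    max_le (by linarith [sq_nonneg (max t 0)]) zero_le_one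
  unfold step
  constructor <;> nlinarith

theorem step_pos {t : ℝ} (ht : 0 < t) : 0 < step t := by
  have lower : 0 ≤ max (1 - (max t 0) ^ 2) 0 := le_max_right _ _
  have upper : max (1 - (max t 0) ^ 2) 0 < 1 :=
    max_lt (by rw [max_eq_left ht.le]; linarith [pow_pos ht 2]) zero_lt_one
  unfold step
  nlinarith

theorem stepDeriv_eq_zero {t : ℝ} (ht : t ≤ 0) : stepDeriv t = 0 := by
  rw [stepDeriv, max_eq_right ht, mul_zero]

theorem stepDeriv_nonneg (t : ℝ) : 0 ≤ stepDeriv t := by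
  have := le_max_right (1 - (max t 0) ^ 2) 0
  have := le_max_right t 0
  unfold stepDeriv
  positivity

theorem stepDeriv_pos {t : ℝ} (ht : t ∈ Ioo (0 : ℝ) 1) : 0 < stepDeriv t := by
  obtain ⟨ht₀, ht₁⟩ := ht
  rw [stepDeriv, max_eq_left ht₀.le]
  have : 0 < max (1 - t ^ 2) 0 := lt_max_of_lt_left (by nlinarith)
  positivity

theorem stepDeriv_le_four (t : ℝ) : stepDeriv t ≤ 4 := by
  rw [stepDeriv]
  rcases le_total t 0 with h | h
  · rw [max_eq_right h]; norm_num
  rw [max_eq_left h]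
  rcases le_total t 1 with h' | h'
  · rw [max_eq_left (by nlinarith)]; nlinarith [mul_nonneg h (sq_nonneg t)]
  · rw [max_eq_right (by nlinarith)]; norm_num

/-- A `C¹` bump on `[0, 1]`, symmetric about `1/2`, equal to `0` outside `[1/8, 7/8]` and to `1` on
`[3/8, 5/8]`: the argument of `step` is `0` at `Y = 1/8` and `1` at `Y = 3/8`. -/
def plateau (Y : ℝ) : ℝ := step (8 * (Y * (1 - Y)) - 7 / 8)

/-- The derivative of `plateau`. -/
def plateauDeriv (Y : ℝ) : ℝ := stepDeriv (8 * (Y * (1 - Y)) - 7 / 8) * (8 * (1 - 2 * Y))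

theorem continuous_plateau : Continuous plateau := by unfold plateau step; fun_prop

theorem continuous_plateauDeriv : Continuous plateauDeriv := by
  unfold plateauDeriv stepDeriv; fun_prop

theorem hasDerivAt_plateau (Y : ℝ) : HasDerivAt plateau (plateauDeriv Y) Y := by
  have inner : HasDerivAt (fun Y : ℝ => 8 * (Y * (1 - Y)) - 7 / 8) (8 * (1 - 2 * Y)) Y := by
    refine ((((hasDerivAt_id Y).mul ((hasDerivAt_id Y).const_sub 1)).const_mul 8).sub_const
      (7 / 8)).congr_deriv ?_
    simp only [id]
    ring
  exact (hasDerivAt_step _).comp Y inner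

theorem plateau_one_sub (Y : ℝ) : plateau (1 - Y) = plateau Y := by
  unfold plateau; ring_nf

theorem plateauDeriv_one_sub (Y : ℝ) : plateauDeriv (1 - Y) = -plateauDeriv Y := by
  unfold plateauDeriv; ring_nf

theorem plateau_eq_zero {Y : ℝ} (hY : Y ≤ 1 / 8) : plateau Y = 0 := step_eq_zero (by nlinarith)

theorem plateauDeriv_eq_zero {Y : ℝ} (hY : Y ≤ 1 / 8) : plateauDeriv Y = 0 := by
  rw [plateauDeriv, stepDeriv_eq_zero (by nlinarith), zero_mul]

theorem plateau_eq_one {Y : ℝ} (hY : Y ∈ Icc (3 / 8 : ℝ) (5 / 8)) : plateau Y = 1 :=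
  step_eq_one (by nlinarith [hY.1, hY.2])

theorem plateau_pos {Y : ℝ} (hY : Y ∈ Ioo (1 / 8 : ℝ) (7 / 8)) : 0 < plateau Y :=
  step_pos (by nlinarith [hY.1, hY.2])

theorem abs_plateau_le_one (Y : ℝ) : |plateau Y| ≤ 1 :=
  (abs_of_nonneg (step_mem_Icc _).1).trans_le (step_mem_Icc _).2

theorem plateauDeriv_nonneg {Y : ℝ} (hY : Y ≤ 1 / 2) : 0 ≤ plateauDeriv Y :=
  mul_nonneg (stepDeriv_nonneg _) (by linarith)

theorem plateauDeriv_pos {Y : ℝ} (hY : Y ∈ Ioo (1 / 8 : ℝ) (3 / 8)) : 0 < plateauDeriv Y :=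
  mul_pos (stepDeriv_pos ⟨by nlinarith [hY.1, hY.2], by nlinarith [hY.1, hY.2]⟩)
    (by linarith [hY.2])

theorem abs_plateauDeriv_le {Y : ℝ} (hY : Y ∈ Icc (0 : ℝ) 1) : |plateauDeriv Y| ≤ 32 := by
  have factor_le : |8 * (1 - 2 * Y)| ≤ 8 := abs_le.2 ⟨by linarith [hY.2], by linarith [hY.1]⟩
  rw [plateauDeriv, abs_mul, abs_of_nonneg (stepDeriv_nonneg _)]
  calc _ ≤ (4 : ℝ) * 8 :=
        mul_le_mul (stepDeriv_le_four _) factor_le (abs_nonneg _) (by norm_num)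
    _ = 32 := by norm_num

end Cutoffs

section Wave

/-- The first harmonic, normalised so that its derivative is `cos (2πx)`. -/
def wave (x : ℝ) : ℝ := Real.sin (2 * Real.pi * x) / (2 * Real.pi)

theorem continuous_wave : Continuous wave := by unfold wave; fun_prop

theorem hasDerivAt_wave (x : ℝ) : HasDerivAt wave (Real.cos (2 * Real.pi * x)) x := by
  have inner : HasDerivAt (fun x => 2 * Real.pi * x) (2 * Real.pi) x := by
    simpa using (hasDerivAt_id x).const_mul (2 * Real.pi)
  refine (inner.sin.div_const (2 * Real.pi)).congr_deriv ?_
  field_simp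

theorem wave_zero : wave 0 = 0 := by simp [wave]

theorem wave_add_one (x : ℝ) : wave (x + 1) = wave x := by
  rw [wave, wave, mul_add, mul_one, Real.sin_add_two_pi]

theorem cos_two_pi_mul_add_one (x : ℝ) :
    Real.cos (2 * Real.pi * (x + 1)) = Real.cos (2 * Real.pi * x) := by
  rw [mul_add, mul_one, Real.cos_add_two_pi]

theorem abs_wave_le_one (x : ℝ) : |wave x| ≤ 1 := by
  have two_pi_pos : 0 < 2 * Real.pi := by positivity
  rw [wave, abs_div, abs_of_pos two_pi_pos, div_le_one two_pi_pos]
  linarith [Real.abs_sin_le_one (2 * Real.pi * x), Real.pi_gt_three]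

theorem wave_ne_zero {x : ℝ} (hx : Real.cos (2 * Real.pi * x) = 0) : wave x ≠ 0 := by
  have sin_ne : Real.sin (2 * Real.pi * x) ≠ 0 := fun hsin => by
    simpa [hsin, hx] using Real.sin_sq_add_cos_sq (2 * Real.pi * x)
  exact div_ne_zero sin_ne (by positivity)

theorem wave_pos {x : ℝ} (hx : x ∈ Ioo (0 : ℝ) (1 / 2)) : 0 < wave x :=
  div_pos (Real.sin_pos_of_pos_of_lt_pi (by nlinarith [hx.1, Real.pi_pos])
    (by nlinarith [hx.2, Real.pi_pos])) (by positivity)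

theorem wave_neg {x : ℝ} (hx : x ∈ Ioo (1 / 2 : ℝ) 1) : wave x < 0 := by
  rw [wave, ← Real.sin_sub_two_pi]
  exact div_neg_of_neg_of_pos (Real.sin_neg_of_neg_of_neg_pi_lt
    (by nlinarith [hx.2, Real.pi_pos]) (by nlinarith [hx.1, Real.pi_pos])) (by positivity)

theorem cos_two_pi_mul_pos {x : ℝ} (hx : x ∈ Ioo (-(1 / 4) : ℝ) (1 / 4)) :
    0 < Real.cos (2 * Real.pi * x) :=
  Real.cos_pos_of_mem_Ioo
    ⟨by nlinarith [hx.1, Real.pi_pos], by nlinarith [hx.2, Real.pi_pos]⟩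

theorem cos_two_pi_mul_neg {x : ℝ} (hx : x ∈ Ioo (1 / 4 : ℝ) (3 / 4)) :
    Real.cos (2 * Real.pi * x) < 0 :=
  Real.cos_neg_of_pi_div_two_lt_of_lt (by nlinarith [hx.1, Real.pi_pos])
    (by nlinarith [hx.2, Real.pi_pos])

end Wave

section VanishingCriteria

variable {u v : ℝ → ℝ} {a b : ℝ}

theorem eqOn_zero_of_mul_deriv_nonpos (hu : ∀ x, HasDerivAt u (v x) x) (ha : u a = 0)
    (huv : ∀ x ∈ Ioo a b, u x * v x ≤ 0) : EqOn u 0 (Icc a b) := by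
  have hasDerivAt_sq (x : ℝ) : HasDerivAt (fun x => u x ^ 2) (2 * (u x * v x)) x :=
    ((hu x).pow 2).congr_deriv (by simp only [Nat.cast_ofNat, Nat.reduceSub, pow_one]; ring)
  have antitone_sq : AntitoneOn (fun x => u x ^ 2) (Icc a b) :=
    antitoneOn_of_hasDerivWithinAt_nonpos (convex_Icc a b)
      (fun x _ => (hasDerivAt_sq x).continuousAt.continuousWithinAt)
      (fun x _ => (hasDerivAt_sq x).hasDerivWithinAt)
      (fun x hx => by linarith [huv x (by rwa [interior_Icc] at hx)])
  intro x hx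
  have sq_le := antitone_sq (left_mem_Icc.2 (hx.1.trans hx.2)) hx hx.1
  simp only [ha] at sq_le
  exact pow_eq_zero_iff two_ne_zero |>.1 (by linarith [sq_nonneg (u x)])

theorem eqOn_zero_of_mul_deriv_nonneg (hu : ∀ x, HasDerivAt u (v x) x) (hb : u b = 0)
    (huv : ∀ x ∈ Ioo a b, 0 ≤ u x * v x) : EqOn u 0 (Icc a b) := by
  have reflected (x : ℝ) : HasDerivAt (fun x => u (-x)) (-v (-x)) x :=
    ((hu (-x)).comp x (hasDerivAt_neg x)).congr_deriv (by ring)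
  have vanish := eqOn_zero_of_mul_deriv_nonpos (a := -b) (b := -a) reflected
    (by simpa only [neg_neg] using hb)
    (fun x hx => by linarith [huv (-x) ⟨by linarith [hx.2], by linarith [hx.1]⟩])
  intro x hx
  simpa using vanish (x := -x) ⟨neg_le_neg hx.2, neg_le_neg hx.1⟩

theorem eqOn_zero_of_abs_mul_deriv_nonneg (hu : ∀ x, HasDerivAt u (v x) x) (ha : u a = 0)
    (hb : u b = 0) (huv : ∀ x ∈ Ioo a b, 0 ≤ |u x| * v x) : EqOn u 0 (Icc a b) := by
  have hasDerivAt_mul_abs_self (x : ℝ) :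
      HasDerivAt (fun x => u x * |u x|) (2 * |u x| * v x) x :=
    (hasDerivAt_mul_abs (u x)).comp x (hu x)
  have monotone_mul_abs : MonotoneOn (fun x => u x * |u x|) (Icc a b) :=
    monotoneOn_of_hasDerivWithinAt_nonneg (convex_Icc a b)
      (fun x _ => (hasDerivAt_mul_abs_self x).continuousAt.continuousWithinAt)
      (fun x _ => (hasDerivAt_mul_abs_self x).hasDerivWithinAt)
      (fun x hx => by linarith [huv x (by rwa [interior_Icc] at hx)])
  intro x hx
  have lower := monotone_mul_abs (left_mem_Icc.2 (hx.1.trans hx.2)) hx hx.1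
  have upper := monotone_mul_abs hx (right_mem_Icc.2 (hx.1.trans hx.2)) hx.2
  simp only [ha, hb, zero_mul] at lower upper
  simpa using le_antisymm upper lower

end VanishingCriteria

/-- `u` is the displacement of the lift of a circle diffeomorphism other than the identity that is
`δ`-close to the identity in the `C¹` topology and fixes `0`. -/
structure IsDisplacement (δ : ℝ) (u : ℝ → ℝ) : Prop where
  contDiff : ContDiff ℝ 1 u
  periodic : Function.Periodic u 1
  map_zero : u 0 = 0
  abs_le (x : ℝ) : |u x| ≤ δ
  abs_deriv_le (x : ℝ) : |deriv u x| ≤ δ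
  ne_zero : u ≠ 0

namespace IsDisplacement

variable {δ : ℝ} {u : ℝ → ℝ}

theorem hasDerivAt (hu : IsDisplacement δ u) (x : ℝ) : HasDerivAt u (deriv u x) x :=
  (hu.contDiff.differentiable one_ne_zero x).hasDerivAt

theorem deriv_add_one (hu : IsDisplacement δ u) (x : ℝ) : deriv u (x + 1) = deriv u x := by
  rw [← deriv_comp_add_const, funext hu.periodic]

theorem neg (hu : IsDisplacement δ u) : IsDisplacement δ (-u) where
  contDiff := hu.contDiff.neg
  periodic x := congrArg Neg.neg (hu.periodic x)
  map_zero := by rw [Pi.neg_apply, hu.map_zero, neg_zero]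
  abs_le x := by rw [Pi.neg_apply, abs_neg]; exact hu.abs_le x
  abs_deriv_le x := by rw [deriv.neg, abs_neg]; exact hu.abs_deriv_le x
  ne_zero := neg_ne_zero.2 hu.ne_zero

theorem eq_zero_of_eqOn (hu : IsDisplacement δ u) (h : EqOn u 0 (Icc 0 1)) : u = 0 := by
  funext x
  obtain ⟨y, hy, hxy⟩ := hu.periodic.exists_mem_Ico₀ one_pos x
  rw [hxy]
  exact h (Ico_subset_Icc_self hy)

/-- If no column works, then `u` has to decrease in modulus away from `0` on `[0, 1/4]`, to increase
in modulus towards `1` on `[3/4, 1]`, and to be nondecreasing in between; so it vanishes. -/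
theorem exists_transverse_column (hu : IsDisplacement δ u) :
    ∃ p, u p ≠ 0 ∧ deriv u p ≠ 0 ∧ Real.cos (2 * Real.pi * p) ≠ 0 ∧
      (0 < deriv u p * Real.cos (2 * Real.pi * p) ∨ u p * wave p < 0) := by
  by_contra! none
  have eqOn_left : EqOn u 0 (Icc 0 (1 / 4)) := by
    refine eqOn_zero_of_mul_deriv_nonpos hu.hasDerivAt hu.map_zero fun x hx => ?_
    have cos_pos := cos_two_pi_mul_pos ⟨by linarith [hx.1], hx.2⟩
    have sin_pos := wave_pos ⟨hx.1, by linarith [hx.2]⟩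
    by_contra! pos
    obtain ⟨decreasing, nonneg⟩ :=
      none x (left_ne_zero_of_mul pos.ne') (right_ne_zero_of_mul pos.ne') cos_pos.ne'
    exact pos.not_ge (mul_nonpos_of_nonneg_of_nonpos (nonneg_of_mul_nonneg_left nonneg sin_pos)
      (nonpos_of_mul_nonpos_left decreasing cos_pos))
  have eqOn_right : EqOn u 0 (Icc (3 / 4) 1) := by
    refine eqOn_zero_of_mul_deriv_nonneg hu.hasDerivAt
      (by rw [hu.periodic.eq, hu.map_zero]) fun x hx => ?_
    have cos_pos : 0 < Real.cos (2 * Real.pi * x) := by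
      rw [← sub_add_cancel x 1, cos_two_pi_mul_add_one]
      exact cos_two_pi_mul_pos ⟨by linarith [hx.1], by linarith [hx.2]⟩
    have sin_neg := wave_neg ⟨by linarith [hx.1], hx.2⟩
    by_contra! neg
    obtain ⟨decreasing, nonneg⟩ :=
      none x (left_ne_zero_of_mul neg.ne) (right_ne_zero_of_mul neg.ne) cos_pos.ne'
    exact neg.not_ge (mul_nonneg_of_nonpos_of_nonpos (nonpos_of_mul_nonneg_left nonneg sin_neg)
      (nonpos_of_mul_nonpos_left decreasing cos_pos))
  have eqOn_middle : EqOn u 0 (Icc (1 / 4) (3 / 4)) := by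
    refine eqOn_zero_of_abs_mul_deriv_nonneg hu.hasDerivAt (eqOn_left (by norm_num))
      (eqOn_right (by norm_num)) fun x hx => ?_
    have cos_neg := cos_two_pi_mul_neg hx
    by_contra! neg
    have increasing := (none x (abs_ne_zero.1 (left_ne_zero_of_mul neg.ne))
      (right_ne_zero_of_mul neg.ne) cos_neg.ne).1
    exact neg.not_ge (mul_nonneg (abs_nonneg _) (nonneg_of_mul_nonpos_left increasing cos_neg))
  refine hu.ne_zero (hu.eq_zero_of_eqOn fun x hx => ?_)
  rcases le_total x (1 / 4) with h | h
  · exact eqOn_left ⟨hx.1, h⟩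
  rcases le_total x (3 / 4) with h' | h'
  · exact eqOn_middle ⟨h, h'⟩
  · exact eqOn_right ⟨h', hx.2⟩

end IsDisplacement

theorem exists_isDisplacement {δ : ℝ} (hδ : δ ≤ 1) {g : T1 ≃ₜ T1}
    (hg : CircleC1DiffeoClose δ g) (hne : ⇑g ≠ id) (hfix : ∃ x, g x = x) :
    ∃ (a : ℝ) (u : ℝ → ℝ), IsDisplacement δ u ∧
      ∀ x : ℝ, g x = ((x + u (x - a) : ℝ) : T1) := by
  obtain ⟨G, contDiff, -, G_add_one, lift, close, deriv_close⟩ := hg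
  obtain ⟨x, hx⟩ := hfix
  obtain ⟨a, rfl⟩ := QuotientAddGroup.mk_surjective x
  have G_a : G a = a :=
    eq_of_coe_eq_coe ((close a).trans_le hδ) ((lift a).symm.trans hx)
  have hasDerivAt (x : ℝ) : HasDerivAt (fun x => G (x + a) - (x + a)) (deriv G (x + a) - 1) x :=
    ((contDiff.differentiable one_ne_zero (x + a)).hasDerivAt.comp_add_const x a).sub
      ((hasDerivAt_id x).add_const a)
  have g_eq (x : ℝ) : g x = ((x + (G (x - a + a) - (x - a + a)) : ℝ) : T1) := by
    rw [lift, sub_add_cancel, add_sub_cancel]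
  refine ⟨a, fun x => G (x + a) - (x + a), ?_, g_eq⟩
  exact {
    contDiff := by fun_prop
    periodic := fun x => by simp only [add_right_comm x 1 a, G_add_one]; ring
    map_zero := by rw [zero_add, G_a, sub_self]
    abs_le := fun x => (close _).le
    abs_deriv_le := fun x => by rw [(hasDerivAt x).deriv]; exact (deriv_close _).le
    ne_zero := fun h => hne (funext (QuotientAddGroup.mk_surjective.forall.2 fun x => by
      refine (g_eq x).trans ?_
      rw [show G (x - a + a) - (x - a + a) = 0 from congrFun h (x - a), add_zero]
      rfl)) }

open scoped NNReal

section Twist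

/-- The piecewise linear function rising from `0` at `a` to `1` at `a + 1/8`. -/
def ramp (a y : ℝ) : ℝ := projIcc (0 : ℝ) 1 zero_le_one (8 * (y - a))

theorem ramp_eq_zero {a y : ℝ} (h : y ≤ a) : ramp a y = 0 := by
  rw [ramp, projIcc_of_le_left _ (by linarith)]

theorem ramp_eq_one {a y : ℝ} (h : a + 1 / 8 ≤ y) : ramp a y = 1 := by
  rw [ramp, projIcc_of_right_le _ (by linarith)]

theorem lipschitzWith_ramp (a : ℝ) : LipschitzWith 8 (ramp a) := by
  refine LipschitzWith.of_dist_le_mul fun x y => ?_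
  calc |ramp a x - ramp a y| ≤ |8 * (x - a) - 8 * (y - a)| := abs_projIcc_sub_projIcc zero_le_one
    _ = 8 * |x - y| := by
        rw [← mul_sub, sub_sub_sub_cancel_right, abs_mul, abs_of_pos (by norm_num : (0 : ℝ) < 8)]

theorem exists_lipschitz_twist (a₀ a₁ j : ℝ) :
    ∃ (k : ℝ → ℝ) (L : ℝ≥0), LipschitzWith L k ∧ (∀ y ≤ 1 / 4, k y = a₀) ∧ k (7 / 16) = j ∧
      k (9 / 16) = 0 ∧ ∀ y, 3 / 4 ≤ y → k y = a₁ := by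
  have lipschitz_mul (c a : ℝ) : LipschitzWith (‖c‖₊ * 8) fun y => c * ramp a y :=
    (lipschitzWith_smul c).comp (lipschitzWith_ramp a)
  refine ⟨fun y => a₀ + (j - a₀) * ramp (1 / 4) y + -j * ramp (7 / 16) y + a₁ * ramp (5 / 8) y, _,
    (((LipschitzWith.const a₀).add (lipschitz_mul _ _)).add (lipschitz_mul _ _)).add
      (lipschitz_mul _ _), fun y hy => ?_, ?_, ?_, fun y hy => ?_⟩
  · simp only [ramp_eq_zero hy, ramp_eq_zero (show y ≤ 7 / 16 by linarith),
      ramp_eq_zero (show y ≤ 5 / 8 by linarith), mul_zero, add_zero]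
  · norm_num [ramp_eq_zero, ramp_eq_one]
  · norm_num [ramp_eq_zero, ramp_eq_one]
  · simp only [ramp_eq_one (show 1 / 4 + 1 / 8 ≤ y by linarith),
      ramp_eq_one (show 7 / 16 + 1 / 8 ≤ y by linarith),
      ramp_eq_one (show 5 / 8 + 1 / 8 ≤ y by linarith)]
    ring

end Twist

section Bounds

theorem abs_mul_add_mul_add_mul_mul_le {δ ν a b c p q X M : ℝ} (ha : |a| ≤ δ) (hb : |b| ≤ δ)
    (hc : |c| ≤ 1) (hp : |p| ≤ 1) (hq : |q| ≤ 1) (hX : |X| ≤ M) :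
    |a * p + b * q + ν * c * X| ≤ 2 * δ + M * |ν| := by
  have hap : |a * p| ≤ δ := by
    rw [abs_mul]; exact (mul_le_of_le_one_right (abs_nonneg a) hp).trans ha
  have hbq : |b * q| ≤ δ := by
    rw [abs_mul]; exact (mul_le_of_le_one_right (abs_nonneg b) hq).trans hb
  have hcX : |ν * c * X| ≤ M * |ν| := by
    calc |ν * c * X| = |c| * |X| * |ν| := by rw [abs_mul, abs_mul]; ring
      _ ≤ 1 * M * |ν| := by gcongr
      _ = M * |ν| := by rw [one_mul]
  linarith [abs_add_three (a * p) (b * q) (ν * c * X)]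

theorem exists_pos_natCast_mul_eq {a c : ℝ} (ha : 0 < a) (hc : 0 < c) (M : ℝ) :
    ∃ (n : ℕ) (ν : ℝ), 0 < n ∧ 0 < ν ∧ n * ν = a ∧ M * ν < c := by
  obtain ⟨n, hn⟩ := exists_nat_gt (|M| * a / c)
  have n_pos : (0 : ℝ) < n := lt_of_le_of_lt (by positivity) hn
  refine ⟨n, a / n, Nat.cast_pos.1 n_pos, by positivity, mul_div_cancel₀ _ n_pos.ne', ?_⟩
  calc M * (a / n) ≤ |M| * (a / n) := by gcongr; exact le_abs_self M
    _ = |M| * a / n := by rw [mul_div_assoc]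
    _ < c := by rw [div_lt_comm₀ n_pos hc]; exact hn

end Bounds

section CollarGeneratingFunction

variable {δ ν : ℝ} {u₀ u₁ : ℝ → ℝ}

/-- The generating function `S(x, Y) = u₀(x) φ(Y) + u₁(x) φ(1 - Y) + ν wave(x) X(Y)`, where `φ` is
`collar` and `X` is `plateau`. Near the boundary it realises the displacements `u₀` and `-u₁`; in
the middle it makes the column `0` flow downwards with speed `ν`. -/
def collarGeneratingFunction (h₀ : IsDisplacement δ u₀) (h₁ : IsDisplacement δ u₁)
    (hsmall : 2 * δ + 32 * |ν| < 1) : GeneratingFunction where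
  dx x Y := deriv u₀ x * collar Y + deriv u₁ x * collar (1 - Y) +
    ν * Real.cos (2 * Real.pi * x) * plateau Y
  dy x Y := u₀ x * collarDeriv Y + u₁ x * -collarDeriv (1 - Y) + ν * wave x * plateauDeriv Y
  dxy x Y := deriv u₀ x * collarDeriv Y + deriv u₁ x * -collarDeriv (1 - Y) +
    ν * Real.cos (2 * Real.pi * x) * plateauDeriv Y
  continuous_dx := by
    have := h₀.contDiff.continuous_deriv_one
    have := h₁.contDiff.continuous_deriv_one
    have := continuous_collar
    have := continuous_plateau
    fun_prop
  continuous_dy := by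
    have := h₀.contDiff.continuous
    have := h₁.contDiff.continuous
    have := continuous_collarDeriv
    have := continuous_plateauDeriv
    have := continuous_wave
    fun_prop
  continuous_dxy := by
    have := h₀.contDiff.continuous_deriv_one
    have := h₁.contDiff.continuous_deriv_one
    have := continuous_collarDeriv
    have := continuous_plateauDeriv
    fun_prop
  hasDerivAt_dx x Y := by
    have reflected : HasDerivAt (fun Y => collar (1 - Y)) (-collarDeriv (1 - Y)) Y :=
      (hasDerivAt_collar (1 - Y)).comp_const_sub 1 Y
    exact (((hasDerivAt_collar Y).const_mul _).add (reflected.const_mul _)).add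
      ((hasDerivAt_plateau Y).const_mul _)
  hasDerivAt_dy x Y := (((h₀.hasDerivAt x).mul_const _).add ((h₁.hasDerivAt x).mul_const _)).add
    (((hasDerivAt_wave x).const_mul ν).mul_const _)
  neg_one_lt_dxy x Y hY := by
    refine (abs_lt.1 (lt_of_le_of_lt ?_ hsmall)).1
    exact abs_mul_add_mul_add_mul_mul_le (h₀.abs_deriv_le x) (h₁.abs_deriv_le x)
      (Real.abs_cos_le_one _) (abs_collarDeriv_le_one hY.1)
      (by rw [abs_neg]; exact abs_collarDeriv_le_one (sub_nonneg.2 hY.2))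
      (abs_plateauDeriv_le hY)
  dx_add_one x Y := by
    rw [h₀.deriv_add_one, h₁.deriv_add_one, cos_two_pi_mul_add_one]
  dy_add_one x Y := by rw [h₀.periodic, h₁.periodic, wave_add_one]
  dx_zero x := by
    rw [collar_zero, collar_eq_zero (by norm_num), plateau_eq_zero (by norm_num)]
    ring
  dx_one x := by
    rw [← plateau_one_sub, sub_self, collar_zero, collar_eq_zero (by norm_num),
      plateau_eq_zero (by norm_num)]
    ring

namespace collarGeneratingFunction

variable (h₀ : IsDisplacement δ u₀) (h₁ : IsDisplacement δ u₁) (hsmall : 2 * δ + 32 * |ν| < 1)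

theorem dx_eq (x Y : ℝ) : (collarGeneratingFunction h₀ h₁ hsmall).dx x Y =
    deriv u₀ x * collar Y + deriv u₁ x * collar (1 - Y) +
      ν * Real.cos (2 * Real.pi * x) * plateau Y := rfl

theorem dy_eq (x Y : ℝ) : (collarGeneratingFunction h₀ h₁ hsmall).dy x Y =
    u₀ x * collarDeriv Y + u₁ x * -collarDeriv (1 - Y) + ν * wave x * plateauDeriv Y := rfl

theorem abs_dx_le (x : ℝ) (Y : I) :
    |(collarGeneratingFunction h₀ h₁ hsmall).dx x Y| ≤ 2 * δ + 1 * |ν| :=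
  abs_mul_add_mul_add_mul_mul_le (h₀.abs_deriv_le x) (h₁.abs_deriv_le x)
    (Real.abs_cos_le_one _) (abs_collar_le_one Y.2.1) (abs_collar_le_one (sub_nonneg.2 Y.2.2))
    (abs_plateau_le_one Y)

theorem abs_dy_le (x : ℝ) (Y : I) :
    |(collarGeneratingFunction h₀ h₁ hsmall).dy x Y| ≤ 2 * δ + 32 * |ν| :=
  abs_mul_add_mul_add_mul_mul_le (h₀.abs_le x) (h₁.abs_le x) (abs_wave_le_one x)
    (abs_collarDeriv_le_one Y.2.1)
    (by rw [abs_neg]; exact abs_collarDeriv_le_one (sub_nonneg.2 Y.2.2)) (abs_plateauDeriv_le Y.2)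

theorem abs_dy_lt_one (x : ℝ) (Y : I) : |(collarGeneratingFunction h₀ h₁ hsmall).dy x Y| < 1 :=
  (abs_dy_le h₀ h₁ hsmall x Y).trans_lt hsmall

theorem dy_zero_right (x : ℝ) : (collarGeneratingFunction h₀ h₁ hsmall).dy x 0 = u₀ x := by
  rw [dy_eq, collarDeriv_zero, collarDeriv_eq_zero (by norm_num),
    plateauDeriv_eq_zero (by norm_num)]
  ring

theorem dy_zero_left (Y : ℝ) : (collarGeneratingFunction h₀ h₁ hsmall).dy 0 Y = 0 := by
  rw [dy_eq, h₀.map_zero, h₁.map_zero, wave_zero]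
  ring

theorem dx_one_sub (x Y : ℝ) : (collarGeneratingFunction h₀ h₁ hsmall).dx x (1 - Y) =
    (collarGeneratingFunction h₁ h₀ hsmall).dx x Y := by
  rw [dx_eq, dx_eq, plateau_one_sub, sub_sub_cancel]
  ring

theorem dy_one_sub (x Y : ℝ) : (collarGeneratingFunction h₀ h₁ hsmall).dy x (1 - Y) =
    -(collarGeneratingFunction h₁ h₀ hsmall).dy x Y := by
  rw [dy_eq, dy_eq, plateauDeriv_one_sub, sub_sub_cancel]
  ring

theorem dy_one_right (x : ℝ) : (collarGeneratingFunction h₀ h₁ hsmall).dy x 1 = -u₁ x := by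
  rw [← sub_zero (1 : ℝ), dy_one_sub, dy_zero_right]

theorem isRegular_one_sub_iff (x Y : ℝ) :
    (collarGeneratingFunction h₀ h₁ hsmall).IsRegular x (1 - Y) ↔
      (collarGeneratingFunction h₁ h₀ hsmall).IsRegular x Y := by
  rw [GeneratingFunction.IsRegular, dx_one_sub, dy_one_sub, neg_ne_zero]
  rfl

theorem dx_of_mem_Icc (x : ℝ) {Y : ℝ} (hY : Y ∈ Icc (1 / 4 : ℝ) (3 / 4)) :
    (collarGeneratingFunction h₀ h₁ hsmall).dx x Y =
      ν * Real.cos (2 * Real.pi * x) * plateau Y := by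
  rw [dx_eq, collar_eq_zero hY.1, collar_eq_zero (by linarith [hY.2])]
  ring

theorem dx_zero_left {Y : ℝ} (hY : Y ∈ Icc (3 / 8 : ℝ) (5 / 8)) :
    (collarGeneratingFunction h₀ h₁ hsmall).dx 0 Y = ν := by
  rw [dx_of_mem_Icc h₀ h₁ hsmall 0 ⟨by linarith [hY.1], by linarith [hY.2]⟩, plateau_eq_one hY,
    mul_zero, Real.cos_zero, mul_one, mul_one]

theorem isRegular_of_cos_ne_zero (hν : 0 < ν) {x Y : ℝ} (hY : Y ∈ Icc (1 / 4 : ℝ) (3 / 4))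
    (hx : Real.cos (2 * Real.pi * x) ≠ 0) :
    (collarGeneratingFunction h₀ h₁ hsmall).IsRegular x Y := by
  have plateau_pos := plateau_pos (Y := Y) ⟨by linarith [hY.1], by linarith [hY.2]⟩
  left
  rw [dx_of_mem_Icc h₀ h₁ hsmall x hY]
  exact mul_ne_zero (mul_ne_zero hν.ne' hx) plateau_pos.ne'

theorem isRegular_level (hν : 0 < ν) (x : ℝ) :
    (collarGeneratingFunction h₀ h₁ hsmall).IsRegular x (5 / 16) := by
  by_cases hx : Real.cos (2 * Real.pi * x) = 0
  · have plateauDeriv_pos := plateauDeriv_pos (Y := 5 / 16) (by norm_num)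
    right
    rw [dy_eq, collarDeriv_eq_zero (by norm_num), collarDeriv_eq_zero (by norm_num), neg_zero,
      mul_zero, mul_zero, add_zero, zero_add]
    exact mul_ne_zero (mul_ne_zero hν.ne' (wave_ne_zero hx)) plateauDeriv_pos.ne'
  · exact isRegular_of_cos_ne_zero h₀ h₁ hsmall hν (by norm_num) hx

theorem dx_of_le {Y : ℝ} (hY : Y ≤ 3 / 4) (x : ℝ) :
    (collarGeneratingFunction h₀ h₁ hsmall).dx x Y =
      deriv u₀ x * collar Y + ν * Real.cos (2 * Real.pi * x) * plateau Y := by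
  rw [dx_eq, collar_eq_zero (by linarith : 1 / 4 ≤ 1 - Y), mul_zero, add_zero]

theorem dy_of_le {Y : ℝ} (hY : Y ≤ 3 / 4) (x : ℝ) :
    (collarGeneratingFunction h₀ h₁ hsmall).dy x Y =
      u₀ x * collarDeriv Y + ν * wave x * plateauDeriv Y := by
  rw [dy_eq, collarDeriv_eq_zero (by linarith : 1 / 4 ≤ 1 - Y), neg_zero, mul_zero, add_zero]

variable {p Y : ℝ}

theorem dx_ne_zero_of_deriv_mul_cos_pos (hν : 0 < ν) (hY : Y ∈ Ioo (0 : ℝ) (1 / 4))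
    (hp : 0 < deriv u₀ p * Real.cos (2 * Real.pi * p)) :
    (collarGeneratingFunction h₀ h₁ hsmall).dx p Y ≠ 0 := by
  set c := Real.cos (2 * Real.pi * p)
  have plateau_nonneg : 0 ≤ plateau Y := (step_mem_Icc _).1
  have collar_pos := collar_pos hY
  have pos : 0 < deriv u₀ p * c * collar Y + ν * c ^ 2 * plateau Y := by positivity
  rw [dx_of_le h₀ h₁ hsmall (by linarith [hY.2])]
  intro zero
  have : deriv u₀ p * c * collar Y + ν * c ^ 2 * plateau Y = 0 := by linear_combination c * zero
  exact pos.ne' this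

theorem dy_ne_zero_of_mul_wave_neg (hν : 0 < ν) (hY : Y ∈ Ioo (1 / 12 : ℝ) (1 / 4))
    (hp : u₀ p * wave p < 0) :
    (collarGeneratingFunction h₀ h₁ hsmall).dy p Y ≠ 0 := by
  have collar_part : u₀ p ^ 2 * collarDeriv Y < 0 :=
    mul_neg_of_pos_of_neg (sq_pos_of_ne_zero (left_ne_zero_of_mul hp.ne)) (collarDeriv_neg hY)
  have plateau_part : ν * (u₀ p * wave p) * plateauDeriv Y ≤ 0 :=
    mul_nonpos_of_nonpos_of_nonneg (mul_neg_of_pos_of_neg hν hp).le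
      (plateauDeriv_nonneg (by linarith [hY.2]))
  rw [dy_of_le h₀ h₁ hsmall (by linarith [hY.2])]
  intro zero
  have : u₀ p ^ 2 * collarDeriv Y + ν * (u₀ p * wave p) * plateauDeriv Y = 0 := by
    linear_combination u₀ p * zero
  linarith

theorem exists_isRegular_column_le (hν : 0 < ν) :
    ∃ p, ∀ Y ∈ Icc (0 : ℝ) (3 / 4), (collarGeneratingFunction h₀ h₁ hsmall).IsRegular p Y := by
  obtain ⟨p, hu, hderiv, hcos, hp⟩ := h₀.exists_transverse_column
  refine ⟨p, fun Y ⟨hY₀, hY₁⟩ => ?_⟩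
  rcases le_or_gt (1 / 4) Y with h | h
  · exact isRegular_of_cos_ne_zero h₀ h₁ hsmall hν ⟨h, hY₁⟩ hcos
  rcases hY₀.eq_or_lt with rfl | hY₀
  · exact .inr (by rwa [dy_zero_right])
  rcases hp with hp | hp
  · exact .inl (dx_ne_zero_of_deriv_mul_cos_pos h₀ h₁ hsmall hν ⟨hY₀, h⟩ hp)
  rcases le_or_gt Y (1 / 8) with h' | h'
  · left
    rw [dx_of_le h₀ h₁ hsmall hY₁, plateau_eq_zero h', mul_zero, add_zero]
    exact mul_ne_zero hderiv (collar_pos ⟨hY₀, h⟩).ne'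
  · exact .inr (dy_ne_zero_of_mul_wave_neg h₀ h₁ hsmall hν ⟨by linarith, h⟩ hp)

theorem exists_isRegular_column_ge (hν : 0 < ν) :
    ∃ q, ∀ Y ∈ Icc (1 / 4 : ℝ) 1, (collarGeneratingFunction h₀ h₁ hsmall).IsRegular q Y := by
  obtain ⟨q, hq⟩ := exists_isRegular_column_le h₁ h₀ hsmall hν
  refine ⟨q, fun Y hY => ?_⟩
  rw [← sub_sub_cancel 1 Y, isRegular_one_sub_iff]
  exact hq _ ⟨by linarith [hY.2], by linarith [hY.1]⟩

variable (κ : C(I, ℝ))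

theorem twistedMap_bot {g : T1 → T1} (hg : ∀ x : ℝ, g x = ((x + u₀ (x - κ 0) : ℝ) : T1)) (x : T1) :
    (collarGeneratingFunction h₀ h₁ hsmall).twistedMap κ (x, 0) = (g x, 0) := by
  refine GeneratingFunction.twistedMap_of_dx_eq_zero _ κ (GeneratingFunction.dx_zero _)
    (fun x => ?_) x
  rw [hg, Icc.coe_zero, dy_zero_right]

theorem twistedMap_top {g : T1 → T1} (hg : ∀ x : ℝ, g x = ((x - u₁ (x - κ 1) : ℝ) : T1)) (x : T1) :
    (collarGeneratingFunction h₀ h₁ hsmall).twistedMap κ (x, 1) = (g x, 1) := by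
  refine GeneratingFunction.twistedMap_of_dx_eq_zero _ κ (GeneratingFunction.dx_one _)
    (fun x => ?_) x
  rw [hg, Icc.coe_one, dy_one_right, sub_eq_add_neg]

theorem exists_path_twistedMap_ne (hν : 0 < ν) :
    ∃ sp : ℝ → CAnn, ContinuousOn sp (Icc 0 1) ∧ ((sp 0).2 : ℝ) = 0 ∧ ((sp 1).2 : ℝ) = 1 ∧
      (∀ t ∈ Ioo (0 : ℝ) 1, ((sp t).2 : ℝ) ∈ Ioo (0 : ℝ) 1) ∧
      ∀ t ∈ Icc (0 : ℝ) 1, (collarGeneratingFunction h₀ h₁ hsmall).twistedMap κ (sp t) ≠ sp t := by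
  obtain ⟨p, hp⟩ := exists_isRegular_column_le h₀ h₁ hsmall hν
  obtain ⟨q, hq⟩ := exists_isRegular_column_ge h₀ h₁ hsmall hν
  exact GeneratingFunction.exists_path_twistedMap_ne _ κ (ℓ := 5 / 16) (by norm_num)
    (abs_dy_lt_one h₀ h₁ hsmall) (fun Y hY => hp Y ⟨hY.1, by linarith [hY.2]⟩)
    (isRegular_level h₀ h₁ hsmall hν) (fun Y hY => hq Y ⟨by linarith [hY.1], hY.2⟩)

theorem exists_essential_loop_twistedMap_ne (hν : 0 < ν) :
    ∃ (Γ : ℝ → ℝ × I) (m : ℤ), m ≠ 0 ∧ Continuous Γ ∧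
      (∀ t, Γ (t + 1) = ((Γ t).1 + (m : ℝ), (Γ t).2)) ∧
      (∀ t, ((Γ t).2 : ℝ) ∈ Ioo (0 : ℝ) 1) ∧
      ∀ t, (collarGeneratingFunction h₀ h₁ hsmall).twistedMap κ (pCA (Γ t)) ≠ pCA (Γ t) :=
  GeneratingFunction.exists_essential_loop_twistedMap_ne _ κ (by norm_num)
    (abs_dy_lt_one h₀ h₁ hsmall) (isRegular_level h₀ h₁ hsmall hν)

theorem iterate_twistedLift (hν : 0 ≤ ν) {n : ℕ} {y y' : I}
    (hy : (y : ℝ) ≤ 5 / 8) (hy' : 3 / 8 ≤ (y' : ℝ)) (hyy' : (y : ℝ) = y' + n * ν) :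
    ((collarGeneratingFunction h₀ h₁ hsmall).twistedLift κ)^[n] (κ y, y) = (κ y', y') := by
  have drift : (collarGeneratingFunction h₀ h₁ hsmall).map^[n] (0, y) = (0, y') :=
    GeneratingFunction.iterate_map_of_dx_eq _ hν
      (fun Y hY => dx_zero_left h₀ h₁ hsmall ⟨hy'.trans hY.1, le_trans hY.2 hy⟩)
      (fun Y => dy_zero_left h₀ h₁ hsmall Y) hyy'
  simpa only [drift, shear_apply, zero_add] using
    (collarGeneratingFunction h₀ h₁ hsmall).iterate_twistedLift_shear κ n (0, y)

variable {κ} {k : ℝ → ℝ} {L : ℝ≥0} {a₀ a₁ : ℝ}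

/-- The collar terms move points only inside the two intervals where `k` is constant, so only the
`ν`-term contributes. -/
theorem abs_sub_comp_add_dx_le (hδ : δ ≤ 1) (hk : LipschitzWith L k)
    (hk₀ : ∀ y ≤ 1 / 4, k y = a₀) (hk₁ : ∀ y, 3 / 4 ≤ y → k y = a₁) (x : ℝ) (Y : I) :
    |k Y - k (Y + (collarGeneratingFunction h₀ h₁ hsmall).dx x Y)| ≤ L * |ν| := by
  obtain ⟨Y, hY₀, hY₁⟩ := Y
  have collar_invariant :
      k Y = k (Y + (deriv u₀ x * collar Y + deriv u₁ x * collar (1 - Y))) := by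
    rcases le_total Y (1 / 4) with h | h
    · rw [collar_eq_zero (by linarith : 1 / 4 ≤ 1 - Y), hk₀ Y h, hk₀]
      have := collar_le_sub ⟨hY₀, h⟩
      nlinarith [collar_nonneg hY₀, (abs_le.1 (h₀.abs_deriv_le x)).2]
    rcases le_total (3 / 4) Y with h' | h'
    · rw [collar_eq_zero h, hk₁ Y h', hk₁]
      have := collar_le_sub (Y := 1 - Y) ⟨by linarith, by linarith⟩
      nlinarith [collar_nonneg (sub_nonneg.2 hY₁), (abs_le.1 (h₁.abs_deriv_le x)).1]
    · rw [collar_eq_zero h, collar_eq_zero (by linarith : 1 / 4 ≤ 1 - Y), mul_zero, mul_zero,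
        add_zero, add_zero]
  calc |k Y - k (Y + (collarGeneratingFunction h₀ h₁ hsmall).dx x Y)|
      ≤ L * |Y + (deriv u₀ x * collar Y + deriv u₁ x * collar (1 - Y)) -
          (Y + (collarGeneratingFunction h₀ h₁ hsmall).dx x Y)| := by
        rw [collar_invariant]; exact hk.dist_le_mul _ _
    _ = L * (|ν| * |Real.cos (2 * Real.pi * x)| * |plateau Y|) := by
        rw [dx_eq, ← abs_mul, ← abs_mul, ← abs_neg]; congr 2; ring
    _ ≤ L * (|ν| * 1 * 1) := by
        gcongr
        exacts [Real.abs_cos_le_one _, abs_plateau_le_one Y]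
    _ = L * |ν| := by ring

theorem dist_twistedMap_lt {ε : ℝ} (hκ : ∀ Y : I, κ Y = k Y) (hδ : δ ≤ 1)
    (hk : LipschitzWith L k) (hk₀ : ∀ y ≤ 1 / 4, k y = a₀) (hk₁ : ∀ y, 3 / 4 ≤ y → k y = a₁)
    (hε : 2 * δ + (32 + L) * |ν| < ε) (z : CAnn) :
    dist ((collarGeneratingFunction h₀ h₁ hsmall).twistedMap κ z) z < ε := by
  have twist_nonneg : 0 ≤ L * |ν| := by positivity
  refine GeneratingFunction.dist_twistedMap_lt _ κ (fun x Y => ?_) (fun x Y => ?_) z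
  · have dy_le := abs_dy_le h₀ h₁ hsmall x Y
    have twist_le := abs_sub_comp_add_dx_le h₀ h₁ hsmall hδ hk hk₀ hk₁ x Y
    rw [hκ, hκ, GeneratingFunction.coe_verticalOrderIso]
    linarith
  · linarith [abs_dx_le h₀ h₁ hsmall x Y, abs_nonneg ν]

end collarGeneratingFunction

end CollarGeneratingFunction

open collarGeneratingFunction in
theorem proposition_construction_general {ε : ℝ} (hε : 0 < ε) {g₀ g₁ : T1 ≃ₜ T1}
    (close₀ : CircleC1DiffeoClose (min (1 / 8) (ε / 8)) g₀)
    (close₁ : CircleC1DiffeoClose (min (1 / 8) (ε / 8)) g₁) (ne_id₀ : ⇑g₀ ≠ id) (ne_id₁ : ⇑g₁ ≠ id)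
    (fix₀ : ∃ x, g₀ x = x) (fix₁ : ∃ x, g₁ x = x) (j : ℝ) :
    ∃ (f : CAnn ≃ₜ CAnn) (fc : (ℝ × I) ≃ₜ (ℝ × I)),
      IsotopicToIdCA f ∧
      Measure.map (⇑f) volume = volume ∧
      (∀ z : ℝ × I, pCA (fc z) = f (pCA z)) ∧
      rotCA fc = {(0 : EReal)} ∧
      (∀ x : T1, f (x, 0) = (g₀ x, 0)) ∧ (∀ x : T1, f (x, 1) = (g₁ x, 1)) ∧
      (∃ sp : ℝ → CAnn, ContinuousOn sp (Icc 0 1) ∧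
        ((sp 0).2 : ℝ) = 0 ∧ ((sp 1).2 : ℝ) = 1 ∧
        (∀ t ∈ Ioo (0 : ℝ) 1, ((sp t).2 : ℝ) ∈ Ioo (0 : ℝ) 1) ∧
        (∀ t ∈ Icc (0 : ℝ) 1, f (sp t) ≠ sp t)) ∧
      (∃ (Γ : ℝ → ℝ × I) (m : ℤ), m ≠ 0 ∧ Continuous Γ ∧
        (∀ t, Γ (t + 1) = ((Γ t).1 + (m : ℝ), (Γ t).2)) ∧
        (∀ t, ((Γ t).2 : ℝ) ∈ Ioo (0 : ℝ) 1) ∧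
        (∀ t, f (pCA (Γ t)) ≠ pCA (Γ t))) ∧
      (∀ η : ℝ, 0 < η → ∃ zc : ℝ × I, zc.1 ∈ Icc (0 : ℝ) η ∧
        ∃ n : ℕ, 1 ≤ n ∧ ((⇑fc)^[n] zc).1 ∈ Icc j (j + η)) ∧
      (∀ z : CAnn, dist (f z) z < ε) := by
  have δ_le : min (1 / 8) (ε / 8) ≤ 1 / 8 := min_le_left _ _
  have δ_le_ε : min (1 / 8) (ε / 8) ≤ ε / 8 := min_le_right _ _
  obtain ⟨a₀, u₀, h₀, lift₀⟩ := exists_isDisplacement (by linarith) close₀ ne_id₀ fix₀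
  obtain ⟨a₁, u₁, h₁, lift₁⟩ := exists_isDisplacement (by linarith) close₁ ne_id₁ fix₁
  obtain ⟨k, L, hk, k_low, k_end, k_start, k_high⟩ := exists_lipschitz_twist a₀ a₁ j
  obtain ⟨n, ν, n_pos, hν, n_mul_ν, ν_small⟩ := exists_pos_natCast_mul_eq (a := 1 / 8) (by norm_num)
    (lt_min one_half_pos (half_pos hε)) (32 + L : ℝ)
  rw [lt_min_iff, ← abs_of_pos hν] at ν_small
  have hsmall : 2 * min (1 / 8) (ε / 8) + 32 * |ν| < 1 := by
    linarith [mul_nonneg L.coe_nonneg (abs_nonneg ν)]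
  let κ : C(I, ℝ) := ⟨fun Y => k Y, hk.continuous.comp continuous_subtype_val⟩
  let S := collarGeneratingFunction h₀ h₁.neg hsmall
  refine ⟨S.twistedMap κ, S.twistedLift κ, S.isotopicToIdCA_twistedMap κ,
    (S.measurePreserving_twistedMap κ).map_eq, S.semiconj_twistedLift κ,
    S.rotCA_twistedLift κ fun Y => dy_zero_left h₀ h₁.neg hsmall Y,
    twistedMap_bot _ _ _ κ fun x => ?_, twistedMap_top _ _ _ κ fun x => ?_,
    exists_path_twistedMap_ne _ _ _ κ hν, exists_essential_loop_twistedMap_ne _ _ _ κ hν,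
    fun η hη => ?_,
    dist_twistedMap_lt _ _ _ (fun _ => rfl) (by linarith) hk k_low k_high (by linarith)⟩
  · rw [lift₀, show κ 0 = a₀ from k_low _ (by norm_num)]
  · rw [lift₁, show κ 1 = a₁ from k_high _ (by norm_num), Pi.neg_apply, sub_neg_eq_add]
  · let y : I := ⟨9 / 16, by norm_num⟩
    let y' : I := ⟨7 / 16, by norm_num⟩
    have orbit : (S.twistedLift κ)^[n] (0, y) = (j, y') := by
      rw [← k_start, ← k_end]
      exact iterate_twistedLift _ _ _ κ hν.le (y := y) (y' := y') (by norm_num [y])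
        (by norm_num [y']) (by norm_num [y, y', n_mul_ν])
    exact ⟨(0, y), by simpa using hη.le, n, n_pos, by simpa [orbit] using hη.le⟩

/-- **Proposition 5.3.** -/
theorem proposition_construction (x₀ x₀' x₁ x₁' : T1) (ε : ℝ) (hε : 0 < ε) :
    ∃ δ : ℝ, 0 < δ ∧
      ∀ g₀ g₁ : T1 ≃ₜ T1,
        CircleC1DiffeoClose δ g₀ → CircleC1DiffeoClose δ g₁ →
        ⇑g₀ ≠ id → ⇑g₁ ≠ id →
        g₀ x₀ = x₀ → g₀ x₀' = x₀' → g₁ x₁ = x₁ → g₁ x₁' = x₁' →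
        ∀ j : ℕ, 1 ≤ j →
          ∃ (f : CAnn ≃ₜ CAnn) (fc : (ℝ × I) ≃ₜ (ℝ × I)),
            IsotopicToIdCA f ∧
            Measure.map (⇑f) volume = volume ∧
            (∀ z : ℝ × I, pCA (fc z) = f (pCA z)) ∧
            rotCA fc = {(0 : EReal)} ∧
            -- (a) boundary behavior
            (∀ x : T1, f (x, 0) = (g₀ x, 0)) ∧ (∀ x : T1, f (x, 1) = (g₁ x, 1)) ∧
            -- (b-1) a path joining the two boundary circles avoiding the fixed points
            (∃ sp : ℝ → CAnn, ContinuousOn sp (Set.Icc 0 1) ∧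
              ((sp 0).2 : ℝ) = 0 ∧ ((sp 1).2 : ℝ) = 1 ∧
              (∀ t ∈ Set.Ioo (0 : ℝ) 1, ((sp t).2 : ℝ) ∈ Set.Ioo (0 : ℝ) 1) ∧
              (∀ t ∈ Set.Icc (0 : ℝ) 1, f (sp t) ≠ sp t)) ∧
            -- (b-2) an essential loop in the interior avoiding the fixed points
            (∃ (Γ : ℝ → ℝ × I) (m : ℤ), m ≠ 0 ∧ Continuous Γ ∧
              (∀ t, Γ (t + 1) = ((Γ t).1 + (m : ℝ), (Γ t).2)) ∧
              (∀ t, ((Γ t).2 : ℝ) ∈ Set.Ioo (0 : ℝ) 1) ∧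
              (∀ t, f (pCA (Γ t)) ≠ pCA (Γ t))) ∧
            -- (c) large horizontal displacement
            (∀ η : ℝ, 0 < η → ∃ zc : ℝ × I, zc.1 ∈ Set.Icc (0 : ℝ) η ∧
              ∃ n : ℕ, 1 ≤ n ∧ ((⇑fc)^[n] zc).1 ∈ Set.Icc (j : ℝ) ((j : ℝ) + η)) ∧
            -- (d) `f` is `ε`-close to the identity in the C⁰ topology
            (∀ z : CAnn, dist (f z) z < ε) :=
  ⟨min (1 / 8) (ε / 8), by positivity, fun _ _ close₀ close₁ ne_id₀ ne_id₁ fix₀ _ fix₁ _ j _ =>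
    proposition_construction_general hε close₀ close₁ ne_id₀ ne_id₁ ⟨x₀, fix₀⟩ ⟨x₁, fix₁⟩ j⟩
end
end

section
/- For every real number ε > 0 there exists a real number δ > 0 such that, if g : 𝕋¹ → 𝕋¹ is a C¹ diffeomorphism of the circle which is δ-close to the identity in the C¹ topology, then there exists a C¹ diffeomorphism f of the closed annulus 𝕋¹ × [0,1] which preserves Lebesgue measure, is ε-close to the identity in the C¹ topology, and satisfies f(x,1) = (g(x), 1) and f(x,0) = (x, 0) for every x ∈ 𝕋¹. -/
open MeasureTheory Filter Topology Set unitInterval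

noncomputable section

/-- The lifted closed strip `ℝ × [0,1] ⊆ ℝ²`. -/
abbrev strip : Set (ℝ × ℝ) := Set.univ ×ˢ Set.Icc (0 : ℝ) 1

/-!
Write `u = ǧ - id` for the displacement of the lift, and let `U` be a primitive of `u`. The
annulus map is given in mixed variables by the generating function
`H (x, Y) = x Y + U (x + τ Y) - U x`, that is,
`y = ∂H/∂x = Y + u (x + τ Y) - u x` and `X = ∂H/∂Y = x + τ' Y * u (x + τ Y)`.
Choosing `τ 0 = τ 1 = 0`, `τ' 0 = 0` and `τ' 1 = 1` makes it the identity on `y = 0` and `ǧ` on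
`y = 1`. The formulas involve `u` but not `u'`, so no derivative is lost and a `C¹` diffeomorphism
is extended by a `C¹` one. The changes of variables `(x, Y) ↦ (x, y)` and `(x, Y) ↦ (X, Y)` have
the same Jacobian `1 + τ' Y * u' (x + τ Y)`, so the map `(x, y) ↦ (X, Y)` preserves area; both are
`C¹`-close to the identity when `u` is `C¹`-small.
-/
open scoped NNReal

section NearIdentity

variable {E : Type*} [NormedAddCommGroup E] {Φ : E → E} {c : ℝ≥0}

theorem antilipschitzWith_of_lipschitzWith_sub_id (hΦ : LipschitzWith c fun z => Φ z - z)
    (hc : c < 1) : AntilipschitzWith (1 - c)⁻¹ Φ := by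
  simpa using AntilipschitzWith.id.add_lipschitzWith hΦ (by simpa using hc)

theorem lipschitzWith_symm_trans_sub_id {a b : E ≃ₜ E} {k l : ℝ≥0}
    (hba : LipschitzWith k fun z => b z - a z) (ha : LipschitzWith l a.symm) :
    LipschitzWith (k * l) fun z => a.symm.trans b z - z := by
  simpa [Function.comp_def] using hba.comp ha

variable [NormedSpace ℝ E]

theorem approximatesLinearOn_refl_of_lipschitzWith_sub_id
    (hΦ : LipschitzWith c fun z => Φ z - z) :
    ApproximatesLinearOn Φ (ContinuousLinearEquiv.refl ℝ E : E →L[ℝ] E) univ c :=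
  ApproximatesLinearOn.approximatesLinearOn_iff_lipschitzOnWith.2 hΦ.lipschitzOnWith

theorem norm_fderiv_sub_id_le_of_lipschitzWith (hΦ : LipschitzWith c fun z => Φ z - z) {z : E}
    (hd : DifferentiableAt ℝ Φ z) : ‖fderiv ℝ Φ z - ContinuousLinearMap.id ℝ E‖ ≤ c := by
  rw [← (hd.hasFDerivAt.sub (hasFDerivAt_id z)).fderiv]
  exact norm_fderiv_le_of_lipschitz ℝ hΦ

theorem norm_fderivWithin_sub_id_le_of_lipschitzWith (hΦ : LipschitzWith c fun z => Φ z - z)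
    {s : Set E} {z : E} (hd : DifferentiableAt ℝ Φ z) (hs : UniqueDiffWithinAt ℝ s z) :
    ‖fderivWithin ℝ Φ s z - ContinuousLinearMap.id ℝ E‖ ≤ c := by
  rw [hd.fderivWithin hs]
  exact norm_fderiv_sub_id_le_of_lipschitzWith hΦ hd

variable [CompleteSpace E]

/-- The homeomorphism of a Banach space underlying a map which differs from the identity by a
strict contraction. -/
def homeomorphOfLipschitzWithSubId (hΦ : LipschitzWith c fun z => Φ z - z) (hc : c < 1) :
    E ≃ₜ E :=
  (approximatesLinearOn_refl_of_lipschitzWith_sub_id hΦ).toHomeomorph Φ <|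
    (subsingleton_or_nontrivial E).imp_right fun (_ : Nontrivial E) => by
      have hnorm : ‖ContinuousLinearMap.id ℝ E‖₊ = 1 := ContinuousLinearMap.nnnorm_id
      simpa [hnorm] using hc

@[simp]
theorem coe_homeomorphOfLipschitzWithSubId (hΦ : LipschitzWith c fun z => Φ z - z) (hc : c < 1) :
    ⇑(homeomorphOfLipschitzWithSubId hΦ hc) = Φ :=
  rfl

theorem lipschitzWith_homeomorphOfLipschitzWithSubId_symm
    (hΦ : LipschitzWith c fun z => Φ z - z) (hc : c < 1) :
    LipschitzWith (1 - c)⁻¹ (homeomorphOfLipschitzWithSubId hΦ hc).symm :=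
  (antilipschitzWith_of_lipschitzWith_sub_id hΦ hc).to_rightInverse
    (homeomorphOfLipschitzWithSubId hΦ hc).apply_symm_apply

theorem isInvertible_of_norm_sub_id_lt_one {L : E →L[ℝ] E}
    (hL : ‖L - ContinuousLinearMap.id ℝ E‖ < 1) : L.IsInvertible := by
  have hunit : IsUnit (1 - (1 - L)) := isUnit_one_sub_of_norm_lt_one (by rwa [norm_sub_rev])
  rw [sub_sub_cancel] at hunit
  exact ⟨ContinuousLinearEquiv.ofUnit hunit.unit, rfl⟩

theorem contDiff_homeomorphOfLipschitzWithSubId_symm (hΦ : LipschitzWith c fun z => Φ z - z)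
    (hc : c < 1) {n : WithTop ℕ∞} (hn : n ≠ 0) (hsmooth : ContDiff ℝ n Φ) :
    ContDiff ℝ n (homeomorphOfLipschitzWithSubId hΦ hc).symm := by
  have hd : Differentiable ℝ Φ := hsmooth.differentiable hn
  have hinv (z : E) : (fderiv ℝ Φ z).IsInvertible :=
    isInvertible_of_norm_sub_id_lt_one <|
      (norm_fderiv_sub_id_le_of_lipschitzWith hΦ (hd z)).trans_lt (by exact_mod_cast hc)
  choose D hD using hinv
  exact (homeomorphOfLipschitzWithSubId hΦ hc).contDiff_symm (f₀' := D)
    (fun z => by simpa [hD] using (hd z).hasFDerivAt) hsmooth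

end NearIdentity

theorem strictMono_of_lipschitzWith_sub_id {φ : ℝ → ℝ} {c : ℝ≥0}
    (hφ : LipschitzWith c fun y => φ y - y) (hc : c < 1) : StrictMono φ := by
  intro y y' hlt
  have hdist : |φ y - y - (φ y' - y')| ≤ c * |y - y'| := hφ.dist_le_mul y y'
  have hcontr : c * |y - y'| < |y - y'| :=
    mul_lt_of_lt_one_left (abs_pos.2 (sub_ne_zero.2 hlt.ne)) (by exact_mod_cast hc)
  rw [abs_of_neg (sub_neg.2 hlt)] at hdist hcontr
  linarith [le_abs_self (φ y - y - (φ y' - y'))]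

theorem lipschitzWith_mul_of_norm_le {X R : Type*} [PseudoMetricSpace X] [NonUnitalSeminormedRing R]
    {f g : X → R} {Cf Cg Kf Kg : ℝ≥0} (hf : LipschitzWith Kf f) (hfb : ∀ x, ‖f x‖ ≤ Cf)
    (hg : LipschitzWith Kg g) (hgb : ∀ x, ‖g x‖ ≤ Cg) :
    LipschitzWith (Cf * Kg + Kf * Cg) fun x => f x * g x := by
  refine LipschitzWith.of_dist_le_mul fun x y => ?_
  calc dist (f x * g x) (f y * g y)
      = ‖f x * (g x - g y) + (f x - f y) * g y‖ := by rw [dist_eq_norm]; congr 1; noncomm_ring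
    _ ≤ ‖f x‖ * ‖g x - g y‖ + ‖f x - f y‖ * ‖g y‖ :=
        (norm_add_le _ _).trans (add_le_add (norm_mul_le _ _) (norm_mul_le _ _))
    _ ≤ Cf * (Kg * dist x y) + Kf * dist x y * Cg := by
        rw [← dist_eq_norm, ← dist_eq_norm]
        gcongr
        exacts [hfb x, hg.dist_le_mul x y, hf.dist_le_mul x y, hgb y]
    _ = ↑(Cf * Kg + Kf * Cg) * dist x y := by push_cast; ring

section MeasurePreserving

theorem map_withDensity_abs_det_eq {E : Type*} [NormedAddCommGroup E] [NormedSpace ℝ E]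
    [FiniteDimensional ℝ E] [MeasurableSpace E] [BorelSpace E] (μ : Measure E)
    [μ.IsAddHaarMeasure] {a : E → E} {a' : E → E →L[ℝ] E} (ha : ∀ z, HasFDerivAt a (a' z) z)
    (hbij : Function.Bijective a) :
    (μ.withDensity fun z => ENNReal.ofReal |(a' z).det|).map a = μ := by
  simpa [hbij.surjective.range_eq] using map_withDensity_abs_det_fderiv_eq_addHaar μ
    MeasurableSet.univ.nullMeasurableSet (fun z _ => (ha z).hasFDerivWithinAt)
    hbij.injective.injOn

theorem measurePreserving_symm_trans_of_abs_det_eq {E : Type*} [NormedAddCommGroup E]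
    [NormedSpace ℝ E] [FiniteDimensional ℝ E] [MeasurableSpace E] [BorelSpace E] (μ : Measure E)
    [μ.IsAddHaarMeasure] {a b : E ≃ₜ E} {a' b' : E → E →L[ℝ] E}
    (ha : ∀ z, HasFDerivAt a (a' z) z) (hb : ∀ z, HasFDerivAt b (b' z) z)
    (hdet : ∀ z, |(a' z).det| = |(b' z).det|) :
    MeasurePreserving (a.symm.trans b) μ μ := by
  set ρ := μ.withDensity fun z => ENNReal.ofReal |(a' z).det| with hρ
  have hmapa : MeasurePreserving a ρ μ :=
    ⟨a.continuous.measurable, map_withDensity_abs_det_eq μ ha a.bijective⟩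
  have hmapb : MeasurePreserving b ρ μ := by
    refine ⟨b.continuous.measurable, ?_⟩
    simp only [hρ, hdet]
    exact map_withDensity_abs_det_eq μ hb b.bijective
  exact hmapb.comp (hmapa.symm a.toMeasurableEquiv)

theorem measurePreserving_of_semiconj_of_isAddFundamentalDomain {G X Y : Type*} [AddGroup G]
    [Countable G] [AddAction G X] [MeasurableSpace X] [MeasurableConstVAdd G X]
    [MeasurableSpace Y] {μ : Measure X} [VAddInvariantMeasure G X μ] {ν : Measure Y} {D : Set X}
    {p : X → Y} {Φ : X → X} {f : Y → Y} (hD : IsAddFundamentalDomain G D μ) (hp : Measurable p)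
    (hpD : MeasurePreserving p (μ.restrict D) ν) (hpG : ∀ (γ : G) x, p (γ +ᵥ x) = p x)
    (hΦ : MeasurePreserving Φ μ μ) (hΦG : ∀ (γ : G) x, Φ (γ +ᵥ x) = γ +ᵥ Φ x)
    (hf : Measurable f) (hsemi : f ∘ p =ᵐ[μ] p ∘ Φ) : MeasurePreserving f ν ν := by
  refine ⟨hf, Measure.ext fun A hA => ?_⟩
  -- `D` and `Φ ⁻¹' D` are fundamental domains, so invariant sets meet them in equal measure.
  have hD' : IsAddFundamentalDomain G (Φ ⁻¹' D) μ :=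
    hD.preimage_of_equiv hΦ.quasiMeasurePreserving Function.bijective_id hΦG
  have hpA : MeasurableSet (p ⁻¹' A) := hp hA
  have hinv (γ : G) : (γ +ᵥ ·) ⁻¹' (Φ ⁻¹' (p ⁻¹' A)) = Φ ⁻¹' (p ⁻¹' A) := by
    ext x
    simp only [mem_preimage, hΦG, hpG]
  calc ν.map f A = μ ((p ⁻¹' (f ⁻¹' A)) ∩ D) := by
        rw [Measure.map_apply hf hA, ← hpD.measure_preimage (hf hA).nullMeasurableSet,
          Measure.restrict_apply (hp (hf hA))]
    _ = μ (Φ ⁻¹' (p ⁻¹' A) ∩ D) :=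
        measure_congr ((hsemi.preimage A).inter (ae_eq_refl D))
    _ = μ (Φ ⁻¹' (p ⁻¹' A) ∩ Φ ⁻¹' D) :=
        hD.measure_set_eq hD' (hΦ.measurable hpA) hinv
    _ = μ (p ⁻¹' A ∩ D) := by
        rw [← preimage_inter,
          hΦ.measure_preimage (hpA.nullMeasurableSet.inter hD.nullMeasurableSet)]
    _ = ν A := by
        rw [← Measure.restrict_apply hpA, hpD.measure_preimage hA.nullMeasurableSet]

theorem measurePreserving_projIcc {a b : ℝ} (h : a ≤ b) (μ : Measure ℝ) :
    MeasurePreserving (projIcc a b h) (μ.restrict (Icc a b)) (μ.comap (↑)) := by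
  refine ⟨continuous_projIcc.measurable, ?_⟩
  rw [← map_comap_subtype_coe measurableSet_Icc,
    Measure.map_map continuous_projIcc.measurable measurable_subtype_coe]
  have hid : projIcc a b h ∘ ((↑) : Icc a b → ℝ) = id := funext (projIcc_val h)
  rw [hid, Measure.map_id]

theorem isAddFundamentalDomain_Ioc_prod_univ {T : ℝ} (hT : 0 < T) (t : ℝ)
    {E : Type*} [AddGroup E] [MeasurableSpace E] (μ : Measure (ℝ × E)) :
    IsAddFundamentalDomain (AddSubgroup.zmultiples ((T, 0) : ℝ × E))
      (Ioc t (t + T) ×ˢ (univ : Set E)) μ := by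
  refine .mk' (measurableSet_Ioc.prod .univ).nullMeasurableSet fun z => ?_
  obtain ⟨n, hn, hunique⟩ := existsUnique_add_zsmul_mem_Ioc hT z.1 t
  have hmem (m : ℤ) : m • ((T, 0) : ℝ × E) + z ∈ Ioc t (t + T) ×ˢ (univ : Set E) ↔
      z.1 + m • T ∈ Ioc t (t + T) := by
    simp [add_comm]
  refine ⟨⟨n • (T, 0), n, rfl⟩, (hmem n).2 hn, ?_⟩
  rintro ⟨_, m, rfl⟩ hm
  exact Subtype.ext (congrArg (· • ((T, 0) : ℝ × E)) (hunique m ((hmem m).1 hm)))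

end MeasurePreserving

section AnnulusLift

/-- The retraction of the plane onto the strip `ℝ × [0, 1]` followed by the covering map of the
closed annulus. -/
def stripProj (z : ℝ × ℝ) : CAnn := ((z.1 : T1), projIcc 0 1 zero_le_one z.2)

theorem continuous_stripProj : Continuous stripProj :=
  ((AddCircle.continuous_mk' 1).comp continuous_fst).prodMk
    (continuous_projIcc.comp continuous_snd)

theorem stripProj_of_mem {z : ℝ × ℝ} (hz : z ∈ strip) :
    stripProj z = ((z.1 : T1), ⟨z.2, hz.2⟩) := by
  rw [stripProj, projIcc_of_mem]

theorem stripProj_zsmul_add (n : ℤ) (z : ℝ × ℝ) : stripProj (n • (1, 0) + z) = stripProj z := by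
  simp [stripProj]

theorem measurableSet_strip : MeasurableSet strip := MeasurableSet.univ.prod measurableSet_Icc

theorem measurePreserving_stripProj :
    MeasurePreserving stripProj
      ((volume.restrict strip).restrict (Ioc (0 : ℝ) (0 + 1) ×ˢ (univ : Set ℝ))) volume := by
  have hmeasure : (volume.restrict strip).restrict (Ioc (0 : ℝ) (0 + 1) ×ˢ (univ : Set ℝ)) =
      (volume.restrict (Ioc (0 : ℝ) (0 + 1))).prod (volume.restrict (Icc (0 : ℝ) 1)) := by
    rw [Measure.restrict_restrict (measurableSet_Ioc.prod .univ), prod_inter_prod, inter_univ,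
      univ_inter, Measure.prod_restrict, Measure.volume_eq_prod]
  rw [hmeasure]
  exact (AddCircle.measurePreserving_mk 1 0).prod (measurePreserving_projIcc zero_le_one volume)

instance vaddInvariantMeasure_restrict_strip :
    VAddInvariantMeasure (AddSubgroup.zmultiples ((1, 0) : ℝ × ℝ)) (ℝ × ℝ)
      (volume.restrict strip) where
  measure_preimage_vadd := by
    rintro ⟨_, n, rfl⟩ A hA
    have hpre : (n • ((1, 0) : ℝ × ℝ) + ·) ⁻¹' strip = strip := by
      ext z
      simp [strip]
    have hmp := (measurePreserving_add_left volume (n • ((1, 0) : ℝ × ℝ))).restrict_preimage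
      measurableSet_strip
    rw [hpre] at hmp
    exact hmp.measure_preimage hA.nullMeasurableSet

/-- A homeomorphism of the plane which descends to the closed annulus: it commutes with the deck
translation `(x, y) ↦ (x + 1, y)` and preserves the strip `ℝ × [0, 1]`. -/
structure IsAnnulusLift (F : ℝ × ℝ ≃ₜ ℝ × ℝ) : Prop where
  map_add : ∀ z, F (z + (1, 0)) = F z + (1, 0)
  mem_strip_iff : ∀ z, F z ∈ strip ↔ z ∈ strip

namespace IsAnnulusLift

variable {F F' : ℝ × ℝ ≃ₜ ℝ × ℝ}

theorem symm (hF : IsAnnulusLift F) : IsAnnulusLift F.symm where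
  map_add z := F.injective <| by simp only [hF.map_add, F.apply_symm_apply]
  mem_strip_iff z := by rw [← hF.mem_strip_iff, F.apply_symm_apply]

theorem trans (hF : IsAnnulusLift F) (hF' : IsAnnulusLift F') : IsAnnulusLift (F.trans F') where
  map_add z := by simp only [Homeomorph.trans_apply, hF.map_add, hF'.map_add]
  mem_strip_iff z := (hF'.mem_strip_iff _).trans (hF.mem_strip_iff z)

theorem mapsTo_strip (hF : IsAnnulusLift F) : MapsTo F strip strip :=
  fun z => (hF.mem_strip_iff z).2

theorem map_zsmul_add (hF : IsAnnulusLift F) (n : ℤ) (z : ℝ × ℝ) :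
    F (n • (1, 0) + z) = n • (1, 0) + F z := by
  let F₁ : AddConstMap (ℝ × ℝ) (ℝ × ℝ) (1, 0) (1, 0) := ⟨F, hF.map_add⟩
  simpa [F₁, add_comm] using! AddConstMapClass.map_add_zsmul F₁ z n

theorem periodic_stripProj (hF : IsAnnulusLift F) (y : ℝ) :
    Function.Periodic (fun x : ℝ => stripProj (F (x, y))) 1 := fun x => by
  have hshift : ((x + 1, y) : ℝ × ℝ) = (1 : ℤ) • (1, 0) + (x, y) := by simp [add_comm]
  simp only [hshift, hF.map_zsmul_add, stripProj_zsmul_add]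

/-- The self-map of the annulus covered by `F`. -/
def toAnnulusMap (hF : IsAnnulusLift F) (p : CAnn) : CAnn :=
  (hF.periodic_stripProj p.2).lift p.1

theorem toAnnulusMap_coe (hF : IsAnnulusLift F) (x : ℝ) (y : I) :
    hF.toAnnulusMap ((x : T1), y) = stripProj (F (x, y)) :=
  rfl

theorem toAnnulusMap_stripProj (hF : IsAnnulusLift F) {z : ℝ × ℝ} (hz : z ∈ strip) :
    hF.toAnnulusMap (stripProj z) = stripProj (F z) := by
  rw [stripProj_of_mem hz, toAnnulusMap_coe]

theorem continuous_toAnnulusMap (hF : IsAnnulusLift F) : Continuous hF.toAnnulusMap := by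
  have hquot : IsOpenQuotientMap (Prod.map ((↑) : ℝ → T1) (id : I → I)) :=
    QuotientAddGroup.isOpenQuotientMap_mk.prodMap .id
  rw [← hquot.continuous_comp_iff]
  exact continuous_stripProj.comp <| F.continuous.comp <|
    continuous_fst.prodMk (continuous_subtype_val.comp continuous_snd)

theorem leftInverse_toAnnulusMap_symm (hF : IsAnnulusLift F) :
    Function.LeftInverse hF.symm.toAnnulusMap hF.toAnnulusMap := by
  rintro ⟨⟨x⟩, y⟩
  have hmem : ((x, y) : ℝ × ℝ) ∈ strip := ⟨trivial, y.2⟩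
  change hF.symm.toAnnulusMap (stripProj (F (x, y))) = _
  rw [hF.symm.toAnnulusMap_stripProj (hF.mapsTo_strip hmem), F.symm_apply_apply,
    stripProj_of_mem hmem]
  rfl

/-- The homeomorphism of the annulus covered by `F`. -/
def toAnnulusHomeomorph (hF : IsAnnulusLift F) : CAnn ≃ₜ CAnn where
  toFun := hF.toAnnulusMap
  invFun := hF.symm.toAnnulusMap
  left_inv := hF.leftInverse_toAnnulusMap_symm
  right_inv := hF.symm.leftInverse_toAnnulusMap_symm
  continuous_toFun := hF.continuous_toAnnulusMap
  continuous_invFun := hF.symm.continuous_toAnnulusMap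

theorem toAnnulusHomeomorph_coe_of_apply_eq (hF : IsAnnulusLift F) {x x' : ℝ} {y y' : I}
    (h : F (x, y) = (x', (y' : ℝ))) :
    hF.toAnnulusHomeomorph ((x : T1), y) = ((x' : T1), y') := by
  refine (hF.toAnnulusMap_coe x y).trans ?_
  rw [h, stripProj, projIcc_val]

theorem exists_toAnnulusHomeomorph_eq (hF : IsAnnulusLift F) (x : ℝ) (y : I) :
    ∃ h : (F (x, y)).2 ∈ Icc (0 : ℝ) 1,
      hF.toAnnulusHomeomorph ((x : T1), y) = (((F (x, y)).1 : T1), ⟨(F (x, y)).2, h⟩) :=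
  have hmem : F (x, y) ∈ strip := hF.mapsTo_strip ⟨trivial, y.2⟩
  ⟨hmem.2, stripProj_of_mem hmem⟩

theorem measurePreserving_toAnnulusHomeomorph (hF : IsAnnulusLift F)
    (hvol : MeasurePreserving F volume volume) :
    MeasurePreserving hF.toAnnulusHomeomorph volume volume := by
  have hpre : F ⁻¹' strip = strip := ext hF.mem_strip_iff
  have hstrip : MeasurePreserving F (volume.restrict strip) (volume.restrict strip) := by
    simpa only [hpre] using hvol.restrict_preimage measurableSet_strip
  refine measurePreserving_of_semiconj_of_isAddFundamentalDomain
    (isAddFundamentalDomain_Ioc_prod_univ one_pos 0 (volume.restrict strip))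
    continuous_stripProj.measurable measurePreserving_stripProj ?_ hstrip ?_
    hF.toAnnulusHomeomorph.continuous.measurable ?_
  · rintro ⟨_, n, rfl⟩ z
    exact stripProj_zsmul_add n z
  · rintro ⟨_, n, rfl⟩ z
    exact hF.map_zsmul_add n z
  · filter_upwards [ae_restrict_mem measurableSet_strip] with z hz
    exact hF.toAnnulusMap_stripProj hz

end IsAnnulusLift

end AnnulusLift

section GeneratingFunction

theorem det_prod_eq {R : Type*} [CommRing R] (L : R × R →ₗ[R] R × R) :
    LinearMap.det L = (L (1, 0)).1 * (L (0, 1)).2 - (L (0, 1)).1 * (L (1, 0)).2 := by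
  rw [← LinearMap.det_toMatrix (Module.Basis.finTwoProd R), Matrix.det_fin_two]
  simp [LinearMap.toMatrix_apply]

/-- For a primitive `U` of `u`, the generating function `H (x, Y) = x Y + U (x + τ Y) - U x`
determines the symplectic map `(x, y) ↦ (X, Y)` by `y = ∂H/∂x` and `X = ∂H/∂Y`. This is the change
of coordinates from the mixed variables `(x, Y)` to the source variables `(x, y)`. -/
def mixedToSource (u τ : ℝ → ℝ) (z : ℝ × ℝ) : ℝ × ℝ :=
  (z.1, z.2 + (u (z.1 + τ z.2) - u z.1))

/-- The change of coordinates from the mixed variables `(x, Y)` to the target variables `(X, Y)`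
of the symplectic map generated by `H`, see `mixedToSource`. -/
def mixedToTarget (u τ : ℝ → ℝ) (z : ℝ × ℝ) : ℝ × ℝ :=
  (z.1 + deriv τ z.2 * u (z.1 + τ z.2), z.2)

variable {u τ : ℝ → ℝ}

theorem contDiff_mixedToSource (hu : ContDiff ℝ 1 u) (hτ : ContDiff ℝ 1 τ) :
    ContDiff ℝ 1 (mixedToSource u τ) := by
  unfold mixedToSource
  fun_prop

theorem contDiff_mixedToTarget (hu : ContDiff ℝ 1 u) (hτ : ContDiff ℝ 2 τ) :
    ContDiff ℝ 1 (mixedToTarget u τ) := by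
  have hτ₁ : ContDiff ℝ 1 τ := hτ.of_le one_le_two
  have hτ' : ContDiff ℝ 1 (deriv τ) := hτ.deriv'
  exact (contDiff_fst.add ((hτ'.comp contDiff_snd).mul
    (hu.comp (contDiff_fst.add (hτ₁.comp contDiff_snd))))).prodMk contDiff_snd

theorem mixedToSource_add (hu : Function.Periodic u 1) (z : ℝ × ℝ) :
    mixedToSource u τ (z + (1, 0)) = mixedToSource u τ z + (1, 0) := by
  simp [mixedToSource, add_right_comm, hu _]

theorem mixedToTarget_add (hu : Function.Periodic u 1) (z : ℝ × ℝ) :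
    mixedToTarget u τ (z + (1, 0)) = mixedToTarget u τ z + (1, 0) := by
  simp [mixedToTarget, add_right_comm, hu _]

theorem hasFDerivAt_comp_fst_add_comp_snd (hu : Differentiable ℝ u) (hτ : Differentiable ℝ τ)
    (z : ℝ × ℝ) :
    HasFDerivAt (fun z : ℝ × ℝ => u (z.1 + τ z.2))
      (deriv u (z.1 + τ z.2) • (ContinuousLinearMap.fst ℝ ℝ ℝ +
        deriv τ z.2 • ContinuousLinearMap.snd ℝ ℝ ℝ)) z :=
  (hu _).hasDerivAt.comp_hasFDerivAt z
    (hasFDerivAt_fst.add ((hτ z.2).hasDerivAt.comp_hasFDerivAt z hasFDerivAt_snd))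

theorem det_fderiv_mixedToSource (hu : Differentiable ℝ u) (hτ : Differentiable ℝ τ)
    (z : ℝ × ℝ) :
    (fderiv ℝ (mixedToSource u τ) z).det = 1 + deriv τ z.2 * deriv u (z.1 + τ z.2) := by
  have hd : HasFDerivAt (mixedToSource u τ) _ z :=
    hasFDerivAt_fst.prodMk <| hasFDerivAt_snd.add <|
      (hasFDerivAt_comp_fst_add_comp_snd hu hτ z).sub
        ((hu z.1).hasDerivAt.comp_hasFDerivAt z hasFDerivAt_fst)
  rw [hd.fderiv, ContinuousLinearMap.det, det_prod_eq]
  simp [mul_comm]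

theorem det_fderiv_mixedToTarget (hu : Differentiable ℝ u) (hτ : Differentiable ℝ τ)
    (hτ' : Differentiable ℝ (deriv τ)) (z : ℝ × ℝ) :
    (fderiv ℝ (mixedToTarget u τ) z).det = 1 + deriv τ z.2 * deriv u (z.1 + τ z.2) := by
  have hd : HasFDerivAt (mixedToTarget u τ) _ z :=
    (hasFDerivAt_fst.add <| ((hτ' z.2).hasDerivAt.comp_hasFDerivAt z hasFDerivAt_snd).mul
      (hasFDerivAt_comp_fst_add_comp_snd hu hτ z)).prodMk hasFDerivAt_snd
  rw [hd.fderiv, ContinuousLinearMap.det, det_prod_eq]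
  simp

variable {C K M M' : ℝ≥0}

theorem lipschitzWith_comp_fst_add_comp_snd (hu : LipschitzWith K u) (hτ : LipschitzWith M τ) :
    LipschitzWith (K * (1 + M)) fun z : ℝ × ℝ => u (z.1 + τ z.2) := by
  simpa using! hu.comp (LipschitzWith.prod_fst.add (hτ.comp LipschitzWith.prod_snd))

theorem mixedToSource_sub_self (z : ℝ × ℝ) :
    mixedToSource u τ z - z = (0, u (z.1 + τ z.2) - u z.1) := by
  ext <;> simp [mixedToSource]

theorem mixedToTarget_sub_self (z : ℝ × ℝ) :
    mixedToTarget u τ z - z = (deriv τ z.2 * u (z.1 + τ z.2), 0) := by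
  ext <;> simp [mixedToTarget]

theorem lipschitzWith_mixedToSource_sub_id (hu : LipschitzWith K u) (hτ : LipschitzWith M τ) :
    LipschitzWith (K * (1 + M) + K) fun z => mixedToSource u τ z - z := by
  have hshear : LipschitzWith (K * (1 + M) + K) fun z : ℝ × ℝ => u (z.1 + τ z.2) - u z.1 := by
    simpa using! (lipschitzWith_comp_fst_add_comp_snd hu hτ).sub (hu.comp LipschitzWith.prod_fst)
  simpa [mixedToSource_sub_self] using (LipschitzWith.const (0 : ℝ)).prodMk hshear

theorem lipschitzWith_deriv_mul_comp (huC : ∀ x, ‖u x‖ ≤ C) (hu : LipschitzWith K u)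
    (hτ : LipschitzWith M τ) (hτ' : LipschitzWith M' (deriv τ)) :
    LipschitzWith (M * (K * (1 + M)) + M' * C)
      fun z : ℝ × ℝ => deriv τ z.2 * u (z.1 + τ z.2) := by
  have hsnd : LipschitzWith M' fun z : ℝ × ℝ => deriv τ z.2 := by
    simpa using! hτ'.comp LipschitzWith.prod_snd
  exact lipschitzWith_mul_of_norm_le hsnd (fun _ => norm_deriv_le_of_lipschitz hτ)
    (lipschitzWith_comp_fst_add_comp_snd hu hτ) (fun _ => huC _)

theorem lipschitzWith_mixedToTarget_sub_id (huC : ∀ x, ‖u x‖ ≤ C) (hu : LipschitzWith K u)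
    (hτ : LipschitzWith M τ) (hτ' : LipschitzWith M' (deriv τ)) :
    LipschitzWith (M * (K * (1 + M)) + M' * C) fun z => mixedToTarget u τ z - z := by
  simpa [mixedToTarget_sub_self] using
    (lipschitzWith_deriv_mul_comp huC hu hτ hτ').prodMk (LipschitzWith.const (0 : ℝ))

theorem mixedToTarget_sub_mixedToSource (z : ℝ × ℝ) :
    mixedToTarget u τ z - mixedToSource u τ z =
      (deriv τ z.2 * u (z.1 + τ z.2), u z.1 - u (z.1 + τ z.2)) := by
  simp [mixedToTarget, mixedToSource]

theorem norm_mixedToTarget_sub_mixedToSource_le (hu : ∀ x, ‖u x‖ ≤ C) (hτ : LipschitzWith M τ)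
    (z : ℝ × ℝ) : ‖mixedToTarget u τ z - mixedToSource u τ z‖ ≤ max (M * C : ℝ) (C + C) := by
  rw [mixedToTarget_sub_mixedToSource]
  exact max_le_max (norm_mul_le_of_le (norm_deriv_le_of_lipschitz hτ) (hu _))
    (norm_sub_le_of_le (hu _) (hu _))

theorem lipschitzWith_mixedToTarget_sub_mixedToSource (huC : ∀ x, ‖u x‖ ≤ C)
    (hu : LipschitzWith K u) (hτ : LipschitzWith M τ) (hτ' : LipschitzWith M' (deriv τ)) :
    LipschitzWith (max (M * (K * (1 + M)) + M' * C) (K + K * (1 + M)))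
      fun z => mixedToTarget u τ z - mixedToSource u τ z := by
  have hvert : LipschitzWith (K + K * (1 + M)) fun z : ℝ × ℝ => u z.1 - u (z.1 + τ z.2) := by
    simpa using! (hu.comp LipschitzWith.prod_fst).sub (lipschitzWith_comp_fst_add_comp_snd hu hτ)
  simpa only [mixedToTarget_sub_mixedToSource] using
    (lipschitzWith_deriv_mul_comp huC hu hτ hτ').prodMk hvert

theorem mixedToSource_mem_strip_iff (hu : LipschitzWith K u) (hτ : LipschitzWith M τ)
    (hKM : K * M < 1) (h₀ : τ 0 = 0) (h₁ : τ 1 = 0) (z : ℝ × ℝ) :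
    mixedToSource u τ z ∈ strip ↔ z ∈ strip := by
  obtain ⟨x, y⟩ := z
  set φ : ℝ → ℝ := fun y => y + (u (x + τ y) - u x) with hφ
  have hφsub : LipschitzWith (K * M) fun y => φ y - y := by
    simpa [hφ] using!
      (hu.comp ((LipschitzWith.const x).add hτ)).sub (LipschitzWith.const (u x))
  have hmono : StrictMono φ := strictMono_of_lipschitzWith_sub_id hφsub hKM
  have hφ₀ : φ 0 = 0 := by simp [hφ, h₀]
  have hφ₁ : φ 1 = 1 := by simp [hφ, h₁]
  have hlower : 0 ≤ φ y ↔ 0 ≤ y := by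
    simpa only [hφ₀] using hmono.le_iff_le (a := 0) (b := y)
  have hupper : φ y ≤ 1 ↔ y ≤ 1 := by
    simpa only [hφ₁] using hmono.le_iff_le (a := y) (b := 1)
  simp only [mem_prod, mem_univ, true_and, mem_Icc]
  exact and_congr hlower hupper

theorem mixedToTarget_mem_strip_iff (z : ℝ × ℝ) : mixedToTarget u τ z ∈ strip ↔ z ∈ strip := by
  simp [mixedToTarget, strip]

end GeneratingFunction

section BoundaryProfile

/-- A height function whose trigonometric form keeps `τ'` and `τ''` bounded on the whole line, with
`τ = 0` at both ends of `[0, 1]`, `τ' = 0` at `0` and `τ' = 1` at `1`. -/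
def boundaryProfile (y : ℝ) : ℝ :=
  Real.sin (2 * Real.pi * y) / (4 * Real.pi) - Real.sin (Real.pi * y) / (2 * Real.pi)

theorem contDiff_boundaryProfile {n : WithTop ℕ∞} : ContDiff ℝ n boundaryProfile := by
  unfold boundaryProfile
  fun_prop

theorem deriv_boundaryProfile :
    deriv boundaryProfile = fun y =>
      (Real.cos (2 * Real.pi * y) - Real.cos (Real.pi * y)) / 2 := by
  funext y
  have hsin (a : ℝ) : HasDerivAt (fun y => Real.sin (a * y)) (Real.cos (a * y) * a) y := by
    simpa using ((hasDerivAt_id y).const_mul a).sin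
  refine (((hsin (2 * Real.pi)).div_const _).sub ((hsin Real.pi).div_const _)).deriv.trans ?_
  field_simp
  ring

theorem boundaryProfile_zero : boundaryProfile 0 = 0 := by simp [boundaryProfile]

theorem boundaryProfile_one : boundaryProfile 1 = 0 := by simp [boundaryProfile]

theorem deriv_boundaryProfile_zero : deriv boundaryProfile 0 = 0 := by
  simp [deriv_boundaryProfile]

theorem deriv_boundaryProfile_one : deriv boundaryProfile 1 = 1 := by
  simp [deriv_boundaryProfile]

theorem lipschitzWith_boundaryProfile : LipschitzWith 1 boundaryProfile := by
  refine lipschitzWith_of_nnnorm_deriv_le (contDiff_boundaryProfile.differentiable one_ne_zero)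
    fun y => ?_
  rw [← NNReal.coe_le_coe, coe_nnnorm, NNReal.coe_one, deriv_boundaryProfile, Real.norm_eq_abs,
    abs_le]
  constructor <;>
    linarith [Real.cos_le_one (2 * Real.pi * y), Real.neg_one_le_cos (2 * Real.pi * y),
      Real.cos_le_one (Real.pi * y), Real.neg_one_le_cos (Real.pi * y)]

theorem lipschitzWith_deriv_boundaryProfile : LipschitzWith 5 (deriv boundaryProfile) := by
  refine LipschitzWith.of_dist_le_mul fun x y => ?_
  have hcos (a : ℝ) (ha : 0 ≤ a) : |Real.cos (a * x) - Real.cos (a * y)| ≤ a * |x - y| := by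
    simpa [Real.dist_eq, ← mul_sub, abs_mul, abs_of_nonneg ha] using
      Real.lipschitzWith_cos.dist_le_mul (a * x) (a * y)
  have h₂ := abs_le.1 (hcos (2 * Real.pi) (by positivity))
  have h₁ := abs_le.1 (hcos Real.pi Real.pi_nonneg)
  have hpi : Real.pi * |x - y| ≤ 3.15 * |x - y| := by gcongr; exact Real.pi_lt_d2.le
  rw [deriv_boundaryProfile, Real.dist_eq, Real.dist_eq, NNReal.coe_ofNat, abs_le]
  constructor <;> linarith [abs_nonneg (x - y)]

end BoundaryProfile

section GeneratedMap

variable {u τ : ℝ → ℝ} {k l : ℝ≥0} (hsource : LipschitzWith k fun z => mixedToSource u τ z - z)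
  (hk : k < 1) (htarget : LipschitzWith l fun z => mixedToTarget u τ z - z) (hl : l < 1)

/-- The symplectic map `(x, y) ↦ (X, Y)` generated by `H`, see `mixedToSource`. -/
def generatedHomeomorph : ℝ × ℝ ≃ₜ ℝ × ℝ :=
  (homeomorphOfLipschitzWithSubId hsource hk).symm.trans
    (homeomorphOfLipschitzWithSubId htarget hl)

theorem generatedHomeomorph_mixedToSource (z : ℝ × ℝ) :
    generatedHomeomorph hsource hk htarget hl (mixedToSource u τ z) = mixedToTarget u τ z :=
  congrArg (mixedToTarget u τ) <|
    (homeomorphOfLipschitzWithSubId hsource hk).symm_apply_apply z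

theorem generatedHomeomorph_of_eq_zero {y : ℝ} (hy : τ y = 0) (x : ℝ) :
    generatedHomeomorph hsource hk htarget hl (x, y) = (x + deriv τ y * u x, y) := by
  simpa [mixedToSource, mixedToTarget, hy] using
    generatedHomeomorph_mixedToSource hsource hk htarget hl (x, y)

theorem norm_generatedHomeomorph_sub_le {r : ℝ}
    (hr : ∀ z, ‖mixedToTarget u τ z - mixedToSource u τ z‖ ≤ r) (z : ℝ × ℝ) :
    ‖generatedHomeomorph hsource hk htarget hl z - z‖ ≤ r := by
  obtain ⟨w, rfl⟩ := (homeomorphOfLipschitzWithSubId hsource hk).surjective z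
  rw [coe_homeomorphOfLipschitzWithSubId, generatedHomeomorph_mixedToSource]
  exact hr w

theorem lipschitzWith_generatedHomeomorph_sub_id {m : ℝ≥0}
    (hm : LipschitzWith m fun z => mixedToTarget u τ z - mixedToSource u τ z) :
    LipschitzWith (m * (1 - k)⁻¹) fun z => generatedHomeomorph hsource hk htarget hl z - z :=
  lipschitzWith_symm_trans_sub_id hm (lipschitzWith_homeomorphOfLipschitzWithSubId_symm hsource hk)

theorem contDiff_generatedHomeomorph (hu : ContDiff ℝ 1 u) (hτ : ContDiff ℝ 2 τ) :
    ContDiff ℝ 1 (generatedHomeomorph hsource hk htarget hl) :=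
  (contDiff_mixedToTarget hu hτ).comp <| contDiff_homeomorphOfLipschitzWithSubId_symm hsource hk
    one_ne_zero (contDiff_mixedToSource hu (hτ.of_le one_le_two))

theorem contDiff_generatedHomeomorph_symm (hu : ContDiff ℝ 1 u) (hτ : ContDiff ℝ 2 τ) :
    ContDiff ℝ 1 (generatedHomeomorph hsource hk htarget hl).symm :=
  (contDiff_mixedToSource hu (hτ.of_le one_le_two)).comp <|
    contDiff_homeomorphOfLipschitzWithSubId_symm htarget hl one_ne_zero
      (contDiff_mixedToTarget hu hτ)

theorem measurePreserving_generatedHomeomorph (hu : ContDiff ℝ 1 u) (hτ : ContDiff ℝ 2 τ) :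
    MeasurePreserving (generatedHomeomorph hsource hk htarget hl) volume volume := by
  have hu₁ : Differentiable ℝ u := hu.differentiable one_ne_zero
  have hτ₁ : ContDiff ℝ 1 τ := hτ.of_le one_le_two
  have hτ₂ : Differentiable ℝ (deriv τ) := hτ.differentiable_deriv_two
  refine measurePreserving_symm_trans_of_abs_det_eq volume
    (fun z => ((contDiff_mixedToSource hu hτ₁).differentiable one_ne_zero z).hasFDerivAt)
    (fun z => ((contDiff_mixedToTarget hu hτ).differentiable one_ne_zero z).hasFDerivAt)
    fun z => ?_
  rw [det_fderiv_mixedToSource hu₁ (hτ₁.differentiable one_ne_zero),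
    det_fderiv_mixedToTarget hu₁ (hτ₁.differentiable one_ne_zero) hτ₂]

theorem isAnnulusLift_generatedHomeomorph {K M : ℝ≥0} (hper : Function.Periodic u 1)
    (hu : LipschitzWith K u) (hτ : LipschitzWith M τ) (hKM : K * M < 1) (h₀ : τ 0 = 0)
    (h₁ : τ 1 = 0) : IsAnnulusLift (generatedHomeomorph hsource hk htarget hl) := by
  have ha : IsAnnulusLift (homeomorphOfLipschitzWithSubId hsource hk) :=
    ⟨mixedToSource_add hper, mixedToSource_mem_strip_iff hu hτ hKM h₀ h₁⟩
  have hb : IsAnnulusLift (homeomorphOfLipschitzWithSubId htarget hl) :=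
    ⟨mixedToTarget_add hper, mixedToTarget_mem_strip_iff⟩
  exact ha.symm.trans hb

end GeneratedMap

section CircleExtension

variable {u : ℝ → ℝ} {K : ℝ≥0}

theorem lipschitzWith_mixedToSource_boundaryProfile_sub_id (hLip : LipschitzWith K u) :
    LipschitzWith (3 * K) fun z => mixedToSource u boundaryProfile z - z :=
  (lipschitzWith_mixedToSource_sub_id hLip lipschitzWith_boundaryProfile).weaken
    (by ring_nf; rfl)

theorem lipschitzWith_mixedToTarget_boundaryProfile_sub_id (hbound : ∀ x, ‖u x‖ ≤ K)
    (hLip : LipschitzWith K u) :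
    LipschitzWith (7 * K) fun z => mixedToTarget u boundaryProfile z - z :=
  (lipschitzWith_mixedToTarget_sub_id hbound hLip lipschitzWith_boundaryProfile
    lipschitzWith_deriv_boundaryProfile).weaken (by ring_nf; rfl)

theorem lipschitzWith_mixedToTarget_sub_mixedToSource_boundaryProfile
    (hbound : ∀ x, ‖u x‖ ≤ K) (hLip : LipschitzWith K u) :
    LipschitzWith (7 * K)
      fun z => mixedToTarget u boundaryProfile z - mixedToSource u boundaryProfile z :=
  (lipschitzWith_mixedToTarget_sub_mixedToSource hbound hLip lipschitzWith_boundaryProfile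
    lipschitzWith_deriv_boundaryProfile).weaken <|
      max_le (by ring_nf; rfl) (by ring_nf; gcongr; norm_num)

theorem exists_measurePreserving_isAnnulusLift (hu : ContDiff ℝ 1 u)
    (hper : Function.Periodic u 1) (hbound : ∀ x, ‖u x‖ ≤ K) (hLip : LipschitzWith K u)
    (hK : 14 * K ≤ 1) :
    ∃ F : ℝ × ℝ ≃ₜ ℝ × ℝ, IsAnnulusLift F ∧ ContDiff ℝ 1 F ∧ ContDiff ℝ 1 F.symm ∧
      MeasurePreserving F volume volume ∧ (∀ x, F (x, 1) = (x + u x, 1)) ∧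
      (∀ x, F (x, 0) = (x, 0)) ∧ (∀ z, ‖F z - z‖ ≤ 2 * K) ∧
      LipschitzWith (14 * K) fun z => F z - z := by
  have hτ := lipschitzWith_boundaryProfile
  have hK₁₄ : 14 * (K : ℝ) ≤ 1 := by exact_mod_cast hK
  have hK₇ : 7 * K < 1 := by
    rw [← NNReal.coe_lt_coe]
    push_cast
    linarith only [hK₁₄, K.coe_nonneg]
  have hK₃ : 3 * K < 1 := lt_of_le_of_lt (by gcongr; norm_num) hK₇
  have hK₁ : K * 1 < 1 := lt_of_le_of_lt (by rw [mul_comm]; gcongr; norm_num) hK₃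
  have hinv : (1 - 3 * K)⁻¹ ≤ 2 := by
    rw [inv_le_comm₀ (tsub_pos_of_lt hK₃) two_pos, ← NNReal.coe_le_coe, NNReal.coe_sub hK₃.le]
    push_cast
    linarith only [hK₁₄]
  refine ⟨generatedHomeomorph (lipschitzWith_mixedToSource_boundaryProfile_sub_id hLip) hK₃
      (lipschitzWith_mixedToTarget_boundaryProfile_sub_id hbound hLip) hK₇,
    isAnnulusLift_generatedHomeomorph _ _ _ _ hper hLip hτ hK₁ boundaryProfile_zero
      boundaryProfile_one,
    contDiff_generatedHomeomorph _ _ _ _ hu contDiff_boundaryProfile,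
    contDiff_generatedHomeomorph_symm _ _ _ _ hu contDiff_boundaryProfile,
    measurePreserving_generatedHomeomorph _ _ _ _ hu contDiff_boundaryProfile,
    fun x => ?_, fun x => ?_, norm_generatedHomeomorph_sub_le _ _ _ _ fun z => ?_,
    (lipschitzWith_generatedHomeomorph_sub_id _ _ _ _
      (lipschitzWith_mixedToTarget_sub_mixedToSource_boundaryProfile hbound hLip)).weaken ?_⟩
  · simp [generatedHomeomorph_of_eq_zero, boundaryProfile_one, deriv_boundaryProfile_one]
  · simp [generatedHomeomorph_of_eq_zero, boundaryProfile_zero, deriv_boundaryProfile_zero]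
  · refine (norm_mixedToTarget_sub_mixedToSource_le hbound hτ z).trans (max_le ?_ ?_) <;>
      push_cast <;> linarith [K.coe_nonneg]
  · calc 7 * K * (1 - 3 * K)⁻¹ ≤ 7 * K * 2 := by gcongr
      _ = 14 * K := by ring

theorem exists_displacement_of_circleC1DiffeoClose {g : T1 ≃ₜ T1}
    (hg : CircleC1DiffeoClose K g) :
    ∃ u : ℝ → ℝ, ContDiff ℝ 1 u ∧ Function.Periodic u 1 ∧ (∀ x, ‖u x‖ ≤ K) ∧
      LipschitzWith K u ∧ ∀ x : ℝ, g x = ((x + u x : ℝ) : T1) := by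
  obtain ⟨gc, hgc, -, hgc_add, hlift, hC0, hC1⟩ := hg
  have hderiv (x : ℝ) : deriv (fun x => gc x - x) x = deriv gc x - 1 := by
    simp [deriv_fun_sub (hgc.differentiable one_ne_zero x)]
  have hu : ContDiff ℝ 1 fun x => gc x - x := hgc.sub contDiff_id
  refine ⟨fun x => gc x - x, hu, fun x => by simp [hgc_add], fun x => (hC0 x).le,
    lipschitzWith_of_nnnorm_deriv_le (hu.differentiable one_ne_zero) fun x => ?_,
    fun x => by rw [hlift, add_sub_cancel]⟩
  rw [hderiv]
  exact (hC1 x).le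

end CircleExtension

/-- **Lemma 5.4.** Any C¹-small circle diffeomorphism on the top boundary circle extends
to a C¹-small area-preserving diffeomorphism of the closed annulus which is the identity
on the bottom boundary circle. -/
theorem extension_of_small_circle_diffeo (ε : ℝ) (hε : 0 < ε) :
    ∃ δ : ℝ, 0 < δ ∧ ∀ g : T1 ≃ₜ T1, CircleC1DiffeoClose δ g →
      ∃ (f : CAnn ≃ₜ CAnn) (F G : ℝ × ℝ → ℝ × ℝ),
        -- `f` preserves Lebesgue measure
        Measure.map (⇑f) volume = volume ∧
        -- boundary conditions
        (∀ x : T1, f (x, 1) = (g x, 1)) ∧ (∀ x : T1, f (x, 0) = (x, 0)) ∧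
        -- `F` is a C¹ lift of `f` with C¹ inverse `G`, so `f` is a C¹ diffeomorphism
        ContDiffOn ℝ 1 F strip ∧ ContDiffOn ℝ 1 G strip ∧
        Set.MapsTo F strip strip ∧ Set.MapsTo G strip strip ∧
        (∀ z ∈ strip, G (F z) = z) ∧ (∀ z ∈ strip, F (G z) = z) ∧
        (∀ z ∈ strip, F (z.1 + 1, z.2) = F z + (1, 0)) ∧
        (∀ (x : ℝ) (y : I), ∃ h : (F (x, (y : ℝ))).2 ∈ Set.Icc (0 : ℝ) 1,
          f ((x : T1), y) = (((F (x, (y : ℝ))).1 : T1), ⟨(F (x, (y : ℝ))).2, h⟩)) ∧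
        -- `f` is `ε`-close to the identity in the C¹ topology
        (∀ z ∈ strip, ‖F z - z‖ < ε) ∧
        (∀ z ∈ strip,
          ‖fderivWithin ℝ F strip z - ContinuousLinearMap.id ℝ (ℝ × ℝ)‖ < ε) := by
  obtain ⟨K, hKpos, hK⟩ : ∃ K : ℝ≥0, 0 < K ∧ 14 * K < min 1 ε.toNNReal := by
    obtain ⟨r, hr, hrε⟩ := exists_between (lt_min one_pos (Real.toNNReal_pos.2 hε))
    exact ⟨r / 14, by positivity, by rwa [mul_div_cancel₀ _ (by norm_num)]⟩
  have hKε : 14 * (K : ℝ) < ε := by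
    exact_mod_cast Real.lt_toNNReal_iff_coe_lt.1 (hK.trans_le (min_le_right _ _))
  refine ⟨K, hKpos, fun g hg => ?_⟩
  obtain ⟨u, hu, hper, hbound, hLip, hgu⟩ := exists_displacement_of_circleC1DiffeoClose hg
  obtain ⟨F, hF, hFsmooth, hGsmooth, hvol, htop, hbot, hC0, hC1⟩ :=
    exists_measurePreserving_isAnnulusLift hu hper hbound hLip (hK.le.trans (min_le_left _ _))
  have hstrip : UniqueDiffOn ℝ strip := uniqueDiffOn_univ.prod (uniqueDiffOn_Icc one_pos)
  refine ⟨hF.toAnnulusHomeomorph, F, F.symm, (hF.measurePreserving_toAnnulusHomeomorph hvol).map_eq,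
    ?_, ?_, hFsmooth.contDiffOn, hGsmooth.contDiffOn, hF.mapsTo_strip, hF.symm.mapsTo_strip,
    fun z _ => F.symm_apply_apply z, fun z _ => F.apply_symm_apply z, fun z _ => ?_,
    hF.exists_toAnnulusHomeomorph_eq, fun z _ => (hC0 z).trans_lt (by linarith [K.coe_nonneg]),
    fun z hz => (norm_fderivWithin_sub_id_le_of_lipschitzWith hC1
      (hFsmooth.differentiable one_ne_zero z) (hstrip z hz)).trans_lt (by exact_mod_cast hKε)⟩
  · rintro ⟨x⟩
    exact (hF.toAnnulusHomeomorph_coe_of_apply_eq (htop x)).trans (by rw [← hgu]; rfl)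
  · rintro ⟨x⟩
    exact hF.toAnnulusHomeomorph_coe_of_apply_eq (hbot x)
  · simpa [Prod.add_def] using hF.map_add z
end
end
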